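/- arXiv:2005.09767 — 2 statements merged into one kernel-verified Lean document; each statement's English description precedes it below -/
import Mathlib

section
/- Let G=(V,E) be a cyclically 4-edge-connected cubic graph, let X ⊂ V with |X| ≥ 2, let H be a component of G − X, and let f = xz ∈ E with x ∈ X and z ∈ V(H). If |E(v,X) \ {f}| ≤ 1 for every v ∈ V(H), then there exist distinct vertices y, y₁, y₂ ∈ V(H) \ {z} with E(y,X) ≠ ∅ and E(y_i, X) ≠ ∅ for i = 1, 2, such that for i = 1, 2 there exists a path P_i ⊆ H − z with ends y and y_i which is peripheral in H and contains no internal vertex with a neighbor in X; moreover, the edge of P₁ incident with y is distinct from the edge of P₂ incident with y. -/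
open scoped Classical

/-- A multigraph with an orientation: each edge `e` has a source `src e` and a target `tgt e`.
Loops and parallel edges are allowed. -/
structure Multigraph (V E : Type) where
  src : E → V
  tgt : E → V

namespace Multigraph

variable {V E : Type}

/-- `u` and `v` are joined by some edge satisfying the predicate `P`. -/
def adjVia (G : Multigraph V E) (P : E → Prop) (u v : V) : Prop :=
  ∃ e, P e ∧ ((G.src e = u ∧ G.tgt e = v) ∨ (G.src e = v ∧ G.tgt e = u))

/-- `v` is reachable from `u` using only edges satisfying `P`. -/
def Reaches (G : Multigraph V E) (P : E → Prop) : V → V → Prop :=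
  Relation.ReflTransGen (G.adjVia P)

/-- The graph is connected when only edges satisfying `P` are kept (all edges deleted
whose predicate fails, all vertices kept). -/
def ConnectedVia (G : Multigraph V E) (P : E → Prop) : Prop :=
  Nonempty V ∧ ∀ u v : V, G.Reaches P u v

def Connected (G : Multigraph V E) : Prop :=
  G.ConnectedVia fun _ => True

/-- `G` is `k`-edge-connected: it is connected and has no edge cut of size less than `k`;
equivalently, deleting any set of fewer than `k` edges leaves it connected. -/
def EdgeConnected (G : Multigraph V E) (k : ℕ) : Prop :=
  ∀ S : Set E, S.ncard < k → G.ConnectedVia fun e => e ∉ S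

/-- The degree of a vertex (loops counted twice). -/
noncomputable def degree (G : Multigraph V E) (v : V) : ℕ :=
  {e | G.src e = v}.ncard + {e | G.tgt e = v}.ncard

/-- Every vertex has degree exactly 3. -/
def Cubic (G : Multigraph V E) : Prop :=
  ∀ v : V, G.degree v = 3

/-- `φ : E → Γ` is a flow: at every vertex, the sum over outgoing edges equals the
sum over incoming edges. -/
def IsFlow [Fintype E] {Γ : Type} [AddCommGroup Γ] (G : Multigraph V E) (φ : E → Γ) : Prop :=
  ∀ v : V, (∑ e : E, if G.src e = v then φ e else 0) = ∑ e : E, if G.tgt e = v then φ e else 0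

/-- The vertex `v` is an endpoint of some edge of `C`. -/
def touches (G : Multigraph V E) (C : Set E) (v : V) : Prop :=
  ∃ e ∈ C, G.src e = v ∨ G.tgt e = v

/-- An edge set `C` is (the edge set of) a cycle: it is nonempty, every vertex it touches
has degree exactly 2 in it, and it is connected. -/
def IsCycle (G : Multigraph V E) (C : Set E) : Prop :=
  C.Nonempty ∧
  (∀ v : V, G.touches C v →
    ({e ∈ C | G.src e = v}.ncard + {e ∈ C | G.tgt e = v}.ncard = 2)) ∧
  (∀ u v : V, G.touches C u → G.touches C v → G.Reaches (· ∈ C) u v)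

/-- `R` is `k`-closed: every cycle with at least one edge outside `R` has at least
`k+1` edges outside `R`. -/
def Closed (G : Multigraph V E) (k : ℕ) (R : Set E) : Prop :=
  ∀ C : Set E, G.IsCycle C → (C \ R).Nonempty → k + 1 ≤ (C \ R).ncard

/-- The `k`-closure `⟨S⟩ₖ` of `S` : the minimal `k`-closed set containing `S`
(the family of `k`-closed sets is closed under intersections). -/
def kClosure (G : Multigraph V E) (k : ℕ) (S : Set E) : Set E :=
  ⋂₀ {R : Set E | S ⊆ R ∧ G.Closed k R}

/-- `S` is a `k`-base: its `k`-closure is the whole edge set. -/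
def IsBase (G : Multigraph V E) (k : ℕ) (S : Set E) : Prop :=
  G.kClosure k S = Set.univ

/-- An edge set `S` is peripheral if `G − S` is connected. -/
def Peripheral (G : Multigraph V E) (S : Set E) : Prop :=
  G.ConnectedVia fun e => e ∉ S

/-- The spanning subgraph `(V, F)` is a forest, i.e. contains no cycle. -/
def IsForest (G : Multigraph V E) (F : Set E) : Prop :=
  ∀ C : Set E, G.IsCycle C → ¬ C ⊆ F

/-- `vs`, `es` describe a path: distinct vertices `vs 0, …, vs n` and distinct edges
`es 0, …, es (n-1)` where `es i` joins `vs i` and `vs (i+1)`. -/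
def IsPath (G : Multigraph V E) {n : ℕ} (vs : Fin (n + 1) → V) (es : Fin n → E) : Prop :=
  Function.Injective vs ∧ Function.Injective es ∧
  ∀ i : Fin n,
    (G.src (es i) = vs i.castSucc ∧ G.tgt (es i) = vs i.succ) ∨
    (G.src (es i) = vs i.succ ∧ G.tgt (es i) = vs i.castSucc)

/-- The edge `e` has `y` as one endpoint and its other endpoint in `X`,
i.e. `e ∈ E(y, X)`. -/
def joins (G : Multigraph V E) (e : E) (y : V) (X : Set V) : Prop :=
  (G.src e = y ∧ G.tgt e ∈ X) ∨ (G.tgt e = y ∧ G.src e ∈ X)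

/-- `W` is the vertex set of a connected component of `G − X`. -/
def IsComponent (G : Multigraph V E) (X W : Set V) : Prop :=
  W.Nonempty ∧ Disjoint W X ∧
  (∀ u ∈ W, ∀ v : V, v ∉ X → G.adjVia (fun _ => True) u v → v ∈ W) ∧
  (∀ u ∈ W, ∀ v ∈ W, G.Reaches (fun e => G.src e ∉ X ∧ G.tgt e ∉ X) u v)

/-- The subgraph induced on `W`, with only those of its edges satisfying `P` kept,
is connected. -/
def ConnectedOn (G : Multigraph V E) (W : Set V) (P : E → Prop) : Prop :=
  ∀ u ∈ W, ∀ v ∈ W, G.Reaches (fun e => P e ∧ G.src e ∈ W ∧ G.tgt e ∈ W) u v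

/-- The subgraph induced on `W` is `k`-edge-connected. -/
def EdgeConnectedOn (G : Multigraph V E) (W : Set V) (k : ℕ) : Prop :=
  ∀ S : Set E, S.ncard < k → G.ConnectedOn W fun e => e ∉ S

/-- Some cycle lies entirely inside the vertex set `X`. -/
def HasCycleIn (G : Multigraph V E) (X : Set V) : Prop :=
  ∃ C : Set E, G.IsCycle C ∧ ∀ e ∈ C, G.src e ∈ X ∧ G.tgt e ∈ X

/-- The edge cut `E(X, V \ X)`. -/
def cutEdges (G : Multigraph V E) (X : Set V) : Set E :=
  {e | (G.src e ∈ X ∧ G.tgt e ∉ X) ∨ (G.src e ∉ X ∧ G.tgt e ∈ X)}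

/-- A cubic graph is cyclically `k`-edge-connected if every edge cut separating two
cycle-containing parts has at least `k` edges. -/
def CyclicallyEdgeConnected (G : Multigraph V E) (k : ℕ) : Prop :=
  ∀ X : Set V, G.HasCycleIn X → G.HasCycleIn Xᶜ → k ≤ (G.cutEdges X).ncard

/-- `G` is 3-connected: more than 3 vertices, connected, and still connected after
deleting any two vertices. -/
def ThreeConnected [Fintype V] (G : Multigraph V E) : Prop :=
  3 < Fintype.card V ∧ G.Connected ∧
    ∀ u v : V, G.ConnectedOn {w : V | w ≠ u ∧ w ≠ v} fun _ => True

/-- The graph `G − r` obtained by deleting the vertex `r` and all incident edges. -/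
def deleteVertex (G : Multigraph V E) (r : V) :
    Multigraph {v : V // v ≠ r} {e : E // G.src e ≠ r ∧ G.tgt e ≠ r} where
  src e := ⟨G.src e.1, e.2.1⟩
  tgt e := ⟨G.tgt e.1, e.2.2⟩

end Multigraph

namespace Multigraph

variable {V E : Type}

/-- The vertices incident with an edge of the finite edge set `F`. -/
noncomputable def verts (G : Multigraph V E) (F : Finset E) : Finset V :=
  F.image G.src ∪ F.image G.tgt

lemma mem_verts {G : Multigraph V E} {F : Finset E} {v : V} :
    v ∈ G.verts F ↔ ∃ e ∈ F, G.src e = v ∨ G.tgt e = v := by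
  simp only [verts, Finset.mem_union, Finset.mem_image]
  constructor
  · rintro (⟨e, he, h⟩ | ⟨e, he, h⟩)
    exacts [⟨e, he, .inl h⟩, ⟨e, he, .inr h⟩]
  · rintro ⟨e, he, h | h⟩
    exacts [.inl ⟨e, he, h⟩, .inr ⟨e, he, h⟩]

lemma verts_mono {G : Multigraph V E} {F F' : Finset E} (h : F' ⊆ F) :
    G.verts F' ⊆ G.verts F := fun v hv => by
  obtain ⟨e, he, h'⟩ := mem_verts.1 hv
  exact mem_verts.2 ⟨e, h he, h'⟩

lemma Reaches.symm {G : Multigraph V E} {P : E → Prop} {u v : V} (h : G.Reaches P u v) :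
    G.Reaches P v u := by
  induction h with
  | refl => exact Relation.ReflTransGen.refl
  | tail _ hbc ih =>
    obtain ⟨e, he, h⟩ := hbc
    exact Relation.ReflTransGen.head ⟨e, he, h.symm⟩ ih

lemma Reaches.mono {G : Multigraph V E} {P Q : E → Prop} (hPQ : ∀ e, P e → Q e) {u v : V}
    (h : G.Reaches P u v) : G.Reaches Q u v :=
  Relation.ReflTransGen.mono (fun _ _ (⟨e, he, h⟩ : G.adjVia P _ _) => ⟨e, hPQ e he, h⟩) _ _ h

lemma sum_card_fiber (F : Finset E) (T : Finset V) (g : E → V) (h : ∀ e ∈ F, g e ∈ T) :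
    ∑ v ∈ T, (F.filter (g · = v)).card = F.card := by
  rw [Finset.card_eq_sum_card_fiberwise (f := g) (t := T) h]

/-- A nonempty finite edge set spanning at most as many vertices as it has edges
contains a cycle. -/
lemma exists_isCycle_subset (G : Multigraph V E) (F : Finset E) (hne : F.Nonempty)
    (hcard : (G.verts F).card ≤ F.card) : ∃ C : Finset E, C ⊆ F ∧ G.IsCycle (C : Set E) := by
  induction F using Finset.strongInduction with
  | H F ih =>
  by_cases hmin : ∃ F' ⊂ F, F'.Nonempty ∧ (G.verts F').card ≤ F'.card
  · obtain ⟨F', hss, hne', hc'⟩ := hmin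
    obtain ⟨C, hC, hcyc⟩ := ih F' hss hne' hc'
    exact ⟨C, hC.trans hss.1, hcyc⟩
  push Not at hmin
  refine ⟨F, subset_rfl, hne, ?_, ?_⟩
  · have key : ∀ v, ((F : Set E) ∩ {e | G.src e = v}).ncard = (F.filter (G.src · = v)).card ∧
        ((F : Set E) ∩ {e | G.tgt e = v}).ncard = (F.filter (G.tgt · = v)).card := by
      intro v
      constructor <;>
      · rw [← Set.ncard_coe_finset]
        congr 1
        ext e
        simp
    have hdeg2 : ∀ v ∈ G.verts F,
        2 ≤ (F.filter (G.src · = v)).card + (F.filter (G.tgt · = v)).card := by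
      intro v hv
      by_contra hlt
      obtain ⟨e, he, hev⟩ := mem_verts.1 hv
      have hv' : v ∉ G.verts (F.erase e) := by
        intro hv'
        obtain ⟨e', he', hev'⟩ := mem_verts.1 hv'
        obtain ⟨hee, he'⟩ := Finset.mem_erase.1 he'
        have h1 : ∀ g : E → V, (∃ a ∈ F, g a = v) → 1 ≤ (F.filter (g · = v)).card :=
          fun g ⟨a, ha, hg⟩ => Finset.card_pos.2 ⟨a, by simp [ha, hg]⟩
        have h2 : ∀ g : E → V, g e = v → g e' = v → 2 ≤ (F.filter (g · = v)).card := by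
          intro g h h'
          rw [← Finset.card_pair hee]
          refine Finset.card_le_card fun a ha => ?_
          simp only [Finset.mem_insert, Finset.mem_singleton] at ha
          rcases ha with rfl | rfl <;> simp [*]
        rcases hev with h | h <;> rcases hev' with h' | h'
        · have := h2 _ h h'; omega
        · have := h1 _ ⟨e, he, h⟩; have := h1 _ ⟨e', he', h'⟩; omega
        · have := h1 _ ⟨e, he, h⟩; have := h1 _ ⟨e', he', h'⟩; omega
        · have := h2 _ h h'; omega
      have hsub : (G.verts (F.erase e)).card + 1 ≤ (G.verts F).card := by
        refine Finset.card_lt_card ⟨verts_mono (Finset.erase_subset _ _), fun h => hv' (h hv)⟩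
      have hce := Finset.card_erase_add_one he
      rcases (F.erase e).eq_empty_or_nonempty with h0 | h0
      · have hF1 : F.card = 1 := by rw [← hce, h0]; rfl
        have hst : G.src e = G.tgt e := by
          by_contra hst
          have : 2 ≤ (G.verts F).card := by
            rw [← Finset.card_pair hst]
            refine Finset.card_le_card fun a ha => ?_
            simp only [Finset.mem_insert, Finset.mem_singleton] at ha
            rcases ha with rfl | rfl
            exacts [mem_verts.2 ⟨e, he, .inl rfl⟩, mem_verts.2 ⟨e, he, .inr rfl⟩]
          omega
        have hs : G.src e = v := by rcases hev with h | h <;> simp [h, hst]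
        have h1 : 1 ≤ (F.filter (G.src · = v)).card :=
          Finset.card_pos.2 ⟨e, by simp [he, hs]⟩
        have h2 : 1 ≤ (F.filter (G.tgt · = v)).card :=
          Finset.card_pos.2 ⟨e, by simp [he, ← hst, hs]⟩
        omega
      · have := hmin _ (Finset.erase_ssubset he) h0
        omega
    have hle : F.card ≤ (G.verts F).card := by
      by_contra hlt
      obtain ⟨e, he⟩ := hne
      have hce := Finset.card_erase_add_one he
      have hvs := Finset.card_le_card (verts_mono (G := G) (Finset.erase_subset e F))
      have hpos : 0 < (G.verts F).card := Finset.card_pos.2 ⟨_, mem_verts.2 ⟨e, he, .inl rfl⟩⟩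
      have := hmin _ (Finset.erase_ssubset he) (Finset.card_pos.1 (by omega))
      omega
    have hsum : ∑ v ∈ G.verts F,
        ((F.filter (G.src · = v)).card + (F.filter (G.tgt · = v)).card) =
          ∑ v ∈ G.verts F, 2 := by
      rw [Finset.sum_add_distrib,
        sum_card_fiber _ _ _ (fun e he => mem_verts.2 ⟨e, he, .inl rfl⟩),
        sum_card_fiber _ _ _ (fun e he => mem_verts.2 ⟨e, he, .inr rfl⟩)]
      simp only [Finset.sum_const, smul_eq_mul]
      omega
    intro v hv
    have hv : v ∈ G.verts F := mem_verts.2 hv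
    have h := ((Finset.sum_eq_sum_iff_of_le hdeg2).1 hsum.symm v hv).symm
    rw [← (key v).1, ← (key v).2] at h
    exact h
  · intro u v hu hv
    by_contra hnot
    set M : Set V := {x | G.Reaches (· ∈ (F : Set E)) u x} with hM
    have hstep : ∀ e ∈ F, (G.src e ∈ M ↔ G.tgt e ∈ M) := fun e he =>
      ⟨fun h => Relation.ReflTransGen.tail h ⟨e, he, .inl ⟨rfl, rfl⟩⟩,
        fun h => Relation.ReflTransGen.tail h ⟨e, he, .inr ⟨rfl, rfl⟩⟩⟩
    have huM : u ∈ M := Relation.ReflTransGen.refl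
    obtain ⟨a, ha, hau⟩ := hu
    obtain ⟨b, hb, hbv⟩ := hv
    have haM : G.src a ∈ M := by
      rcases hau with h | h
      · rwa [h]
      · rw [hstep a ha, h]; exact huM
    have hbM : G.src b ∉ M := by
      rcases hbv with h | h
      · rwa [h]
      · rw [hstep b hb, h]; exact hnot
    have h1 := hmin (F.filter (G.src · ∈ M))
      ⟨Finset.filter_subset _ _, fun h => hbM (Finset.mem_filter.1 (h hb)).2⟩
      ⟨a, Finset.mem_filter.2 ⟨ha, haM⟩⟩
    have h2 := hmin (F.filter (G.src · ∉ M))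
      ⟨Finset.filter_subset _ _, fun h => (Finset.mem_filter.1 (h ha)).2 haM⟩
      ⟨b, Finset.mem_filter.2 ⟨hb, hbM⟩⟩
    have hdisj : Disjoint (G.verts (F.filter (G.src · ∈ M)))
        (G.verts (F.filter (G.src · ∉ M))) := by
      rw [Finset.disjoint_left]
      intro x hx hx'
      obtain ⟨e, he, hex⟩ := mem_verts.1 hx
      obtain ⟨e', he', hex'⟩ := mem_verts.1 hx'
      obtain ⟨he, heM⟩ := Finset.mem_filter.1 he
      obtain ⟨he', heM'⟩ := Finset.mem_filter.1 he'
      have hxM : x ∈ M := by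
        rcases hex with h | h
        · rwa [← h]
        · rw [← h, ← hstep e he]; exact heM
      apply heM'
      rcases hex' with h | h
      · rwa [h]
      · rw [hstep e' he', h]; exact hxM
    have h3 := Finset.card_le_card (Finset.union_subset
      (verts_mono (G := G) (Finset.filter_subset (G.src · ∈ M) F))
      (verts_mono (G := G) (Finset.filter_subset (G.src · ∉ M) F)))
    rw [Finset.card_union_of_disjoint hdisj] at h3
    have h4 := Finset.card_filter_add_card_filter_not (s := F) (G.src · ∈ M)
    omega

lemma cutEdges_compl (G : Multigraph V E) (S : Set V) : G.cutEdges Sᶜ = G.cutEdges S := by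
  ext e
  simp only [cutEdges, Set.mem_compl_iff, Set.mem_ofPred_eq]
  tauto

/-- A vertex of a cubic graph is incident with at most three edges. -/
lemma card_le_three_of_incident [Fintype E] {G : Multigraph V E} (hcubic : G.Cubic) (v : V)
    (s : Finset E)
    (hs : ∀ e ∈ s, G.src e = v ∨ G.tgt e = v) : s.card ≤ 3 := by
  have h1 : (s : Set E) ⊆ {e | G.src e = v} ∪ {e | G.tgt e = v} := fun e he => hs e he
  have h2 := Set.ncard_le_ncard h1 (Set.toFinite _)
  have h3 := Set.ncard_union_le {e | G.src e = v} {e | G.tgt e = v}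
  have h4 : G.degree v = 3 := hcubic v
  rw [Set.ncard_coe_finset] at h2
  rw [degree] at h4
  omega

section Cuts

variable [Fintype V] [Fintype E]

/-- Counting the degrees of the vertices of `S` in a cubic graph. -/
lemma three_mul_card_eq {G : Multigraph V E} (hcubic : G.Cubic) (S : Set V) :
    3 * S.ncard = 2 * {e | G.src e ∈ S ∧ G.tgt e ∈ S}.ncard + (G.cutEdges S).ncard := by
  have fib : ∀ g : E → V, {e | g e ∈ S}.ncard = ∑ v ∈ S.toFinset, {e | g e = v}.ncard := by
    intro g
    have : ∀ v, {e | g e = v}.ncard =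
        ((Finset.univ.filter (g · ∈ S)).filter (g · = v)).card ∨ v ∉ S := by
      intro v
      by_cases hv : v ∈ S
      · left
        rw [← Set.ncard_coe_finset]
        congr 1
        ext e
        simp only [Set.mem_ofPred_eq, Finset.coe_filter, Finset.mem_filter, Finset.mem_univ,
          true_and]
        exact ⟨fun h => ⟨h ▸ hv, h⟩, fun h => h.2⟩
      · exact .inr hv
    rw [Finset.sum_congr rfl fun v hv => (this v).resolve_right
      (not_not.2 (Set.mem_toFinset.1 hv)), sum_card_fiber]
    · rw [← Set.ncard_coe_finset]; simp
    · intro e he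
      simpa using he
  have hs : ∑ v ∈ S.toFinset, G.degree v = 3 * S.ncard := by
    rw [Finset.sum_congr rfl fun v _ => hcubic v, Finset.sum_const, smul_eq_mul,
      Set.ncard_eq_toFinset_card' S, mul_comm]
  simp only [degree, Finset.sum_add_distrib, ← fib] at hs
  have e1 : {e | G.src e ∈ S} =
      {e | G.src e ∈ S ∧ G.tgt e ∈ S} ∪ {e | G.src e ∈ S ∧ G.tgt e ∉ S} := by
    ext e; simp only [Set.mem_ofPred_eq, Set.mem_union]; tauto
  have e2 : {e | G.tgt e ∈ S} =
      {e | G.src e ∈ S ∧ G.tgt e ∈ S} ∪ {e | G.src e ∉ S ∧ G.tgt e ∈ S} := by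
    ext e; simp only [Set.mem_ofPred_eq, Set.mem_union]; tauto
  have e3 : G.cutEdges S =
      {e | G.src e ∈ S ∧ G.tgt e ∉ S} ∪ {e | G.src e ∉ S ∧ G.tgt e ∈ S} := rfl
  rw [e1, e2, Set.ncard_union_eq, Set.ncard_union_eq] at hs
  · rw [e3, Set.ncard_union_eq]
    · omega
    · exact Set.disjoint_left.2 fun e h h' => h'.1 h.1
  · exact Set.disjoint_left.2 fun e h h' => h'.1 h.1
  · exact Set.disjoint_left.2 fun e h h' => h'.2 h.2

lemma card_add_two_le_cut_of_acyclic {G : Multigraph V E} (hcubic : G.Cubic) {S : Set V}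
    (hS : S.Nonempty) (hac : ¬ G.HasCycleIn S) : S.ncard + 2 ≤ (G.cutEdges S).ncard := by
  have hcount := three_mul_card_eq hcubic S
  have hpos : 0 < S.ncard := (Set.ncard_pos S.toFinite).2 hS
  set F : Finset E := {e | G.src e ∈ S ∧ G.tgt e ∈ S}.toFinset with hF
  have hFc : {e | G.src e ∈ S ∧ G.tgt e ∈ S}.ncard = F.card := Set.ncard_eq_toFinset_card' _
  rcases F.eq_empty_or_nonempty with h0 | hne
  · rw [h0, Finset.card_empty] at hFc
    omega
  · have hlt : F.card < (G.verts F).card := by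
      by_contra hle
      obtain ⟨C, hCF, hC⟩ := G.exists_isCycle_subset F hne (not_lt.1 hle)
      exact hac ⟨C, hC, fun e he => by simpa [hF] using hCF he⟩
    have hle : (G.verts F).card ≤ S.ncard := by
      rw [Set.ncard_eq_toFinset_card' S]
      refine Finset.card_le_card fun v hv => ?_
      obtain ⟨e, he, h⟩ := mem_verts.1 hv
      simp only [hF, Set.mem_toFinset, Set.mem_ofPred_eq] at he
      rw [Set.mem_toFinset]
      rcases h with rfl | rfl
      exacts [he.1, he.2]
    omega

lemma three_le_cut {G : Multigraph V E} (hcubic : G.Cubic) (hcyc : G.CyclicallyEdgeConnected 4)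
    {S : Set V} (hS : S.Nonempty) (hS' : Sᶜ.Nonempty) : 3 ≤ (G.cutEdges S).ncard := by
  have h1 : 0 < S.ncard := (Set.ncard_pos S.toFinite).2 hS
  have h2 : 0 < Sᶜ.ncard := (Set.ncard_pos Sᶜ.toFinite).2 hS'
  by_cases hc : G.HasCycleIn S
  · by_cases hc' : G.HasCycleIn Sᶜ
    · have := hcyc S hc hc'; omega
    · have := card_add_two_le_cut_of_acyclic hcubic hS' hc'
      rw [cutEdges_compl] at this
      omega
  · have := card_add_two_le_cut_of_acyclic hcubic hS hc
    omega

lemma four_le_cut {G : Multigraph V E} (hcubic : G.Cubic) (hcyc : G.CyclicallyEdgeConnected 4)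
    {S : Set V} (hS : 2 ≤ S.ncard) (hS' : 2 ≤ Sᶜ.ncard) : 4 ≤ (G.cutEdges S).ncard := by
  have h1 : S.Nonempty := (Set.ncard_pos S.toFinite).1 (by omega)
  have h2 : Sᶜ.Nonempty := (Set.ncard_pos Sᶜ.toFinite).1 (by omega)
  by_cases hc : G.HasCycleIn S
  · by_cases hc' : G.HasCycleIn Sᶜ
    · exact hcyc S hc hc'
    · have := card_add_two_le_cut_of_acyclic hcubic h2 hc'
      rw [cutEdges_compl] at this
      omega
  · have := card_add_two_le_cut_of_acyclic hcubic h1 hc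
    omega

end Cuts

/-- The edge `e` has ends `a` and `b`. -/
def Link (G : Multigraph V E) (e : E) (a b : V) : Prop :=
  (G.src e = a ∧ G.tgt e = b) ∨ (G.src e = b ∧ G.tgt e = a)

/-- The edges with both ends in `S`. -/
def within (G : Multigraph V E) (S : Set V) : Set E := {e | G.src e ∈ S ∧ G.tgt e ∈ S}

/-- The vertex `v` is an end of some edge of the cut `E(W, V \ W)`. -/
def OnBoundary (G : Multigraph V E) (W : Set V) (v : V) : Prop := G.touches (G.cutEdges W) v

/-- The vertices reachable from `r` in the subgraph induced on `W`, using only edges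
satisfying `P`. -/
def reachIn (G : Multigraph V E) (P : E → Prop) (W : Set V) (r : V) : Set V :=
  {u | G.Reaches (fun e => P e ∧ G.src e ∈ W ∧ G.tgt e ∈ W) r u}

/-- Every nonempty proper subset of `W` is joined to the rest of `W` by at least two edges. -/
def BridgelessOn (G : Multigraph V E) (W : Set V) : Prop :=
  ∀ S ⊆ W, S.Nonempty → (W \ S).Nonempty → ∀ e₀ : E,
    ∃ e a b, e ≠ e₀ ∧ G.Link e a b ∧ a ∈ S ∧ b ∈ W \ S

/-- `R` is the edge set of a nontrivial path from `y` to `y'` inside `W` avoiding `z`, which is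
peripheral in the graph induced on `W` and has no internal vertex on the boundary of `W`. -/
def PeripheralPath (G : Multigraph V E) (W : Set V) (z y y' : V) (R : Set E) : Prop :=
  ∃ (n : ℕ) (vs : Fin (n + 1 + 1) → V) (es : Fin (n + 1) → E),
    G.IsPath vs es ∧ vs 0 = y ∧ vs (Fin.last (n + 1)) = y' ∧ Set.range es = R ∧
    (∀ i, vs i ∈ W ∧ vs i ≠ z) ∧ G.ConnectedOn W (fun e => e ∉ R) ∧
    ∀ i, i ≠ 0 → i ≠ Fin.last (n + 1) → ¬ G.OnBoundary W (vs i)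

section Connectivity

variable {G : Multigraph V E}

lemma Link.symm {e : E} {a b : V} (h : G.Link e a b) : G.Link e b a := Or.symm h

lemma link_self (G : Multigraph V E) (e : E) : G.Link e (G.src e) (G.tgt e) := .inl ⟨rfl, rfl⟩

lemma Link.incident {e : E} {a b : V} (h : G.Link e a b) : G.src e = a ∨ G.tgt e = a := by
  rcases h with h | h
  exacts [.inl h.1, .inr h.2]

lemma Link.mem_within_iff {e : E} {a b : V} (h : G.Link e a b) {S : Set V} :
    e ∈ G.within S ↔ a ∈ S ∧ b ∈ S := by
  rcases h with ⟨rfl, rfl⟩ | ⟨rfl, rfl⟩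
  · rfl
  · exact and_comm

lemma Link.mem_cutEdges {e : E} {a b : V} (h : G.Link e a b) {S : Set V} (ha : a ∈ S)
    (hb : b ∉ S) : e ∈ G.cutEdges S := by
  rcases h with ⟨rfl, rfl⟩ | ⟨rfl, rfl⟩
  exacts [.inl ⟨ha, hb⟩, .inr ⟨hb, ha⟩]

lemma exists_link_of_mem_cutEdges {e : E} {S : Set V} (h : e ∈ G.cutEdges S) :
    ∃ a b, G.Link e a b ∧ a ∈ S ∧ b ∉ S := by
  rcases h with h | h
  exacts [⟨_, _, G.link_self e, h.1, h.2⟩, ⟨_, _, (G.link_self e).symm, h.2, h.1⟩]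

lemma notMem_within_of_mem_cutEdges {e : E} {S : Set V} (h : e ∈ G.cutEdges S) :
    e ∉ G.within S := by
  rintro ⟨h1, h2⟩
  rcases h with h | h
  exacts [h.2 h2, h.1 h1]

lemma mem_of_link_of_not_onBoundary {W : Set V} {e : E} {a b : V} (h : G.Link e a b)
    (ha : a ∈ W) (hb : ¬ G.OnBoundary W a) : b ∈ W := by
  by_contra hbW
  exact hb ⟨e, h.mem_cutEdges ha hbW, h.incident⟩

lemma Reaches.step {P : E → Prop} {u a b : V} {e : E} (h : G.Reaches P u a) (he : P e)
    (hl : G.Link e a b) : G.Reaches P u b :=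
  Relation.ReflTransGen.tail h ⟨e, he, hl⟩

lemma Reaches.trans {P : E → Prop} {u v w : V} (h : G.Reaches P u v) (h' : G.Reaches P v w) :
    G.Reaches P u w :=
  Relation.ReflTransGen.trans h h'

/-- A walk leaving `S` uses an edge from `S` to its complement. -/
lemma Reaches.exists_exit {P : E → Prop} {u v : V} (h : G.Reaches P u v) {S : Set V}
    (hu : u ∈ S) (hv : v ∉ S) : ∃ e a b, P e ∧ G.Link e a b ∧ a ∈ S ∧ b ∉ S := by
  induction h with
  | refl => exact absurd hu hv
  | @tail b c _ hbc ih =>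
    obtain ⟨e, he, hl⟩ := hbc
    by_cases hb : b ∈ S
    · exact ⟨e, b, c, he, hl, hb, hv⟩
    · exact ih hb

lemma Reaches.mem_of_closed {P : E → Prop} {u v : V} (h : G.Reaches P u v) {S : Set V}
    (hu : u ∈ S) (hS : ∀ e a b, P e → G.Link e a b → a ∈ S → b ∈ S) : v ∈ S := by
  by_contra hv
  obtain ⟨e, a, b, he, hl, ha, hb⟩ := h.exists_exit hu hv
  exact hb (hS e a b he hl ha)

/-- A vertex other than the start reached by a walk is an end of one of its edges. -/
lemma Reaches.exists_incident {P : E → Prop} {u v : V} (h : G.Reaches P u v) (hne : u ≠ v) :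
    ∃ e, P e ∧ (G.src e = v ∨ G.tgt e = v) := by
  obtain ⟨e, a, b, he, hl, rfl, -⟩ := h.symm.exists_exit (S := {v}) rfl hne
  exact ⟨e, he, hl.incident⟩

lemma self_mem_reachIn {P : E → Prop} {W : Set V} {r : V} : r ∈ G.reachIn P W r :=
  Relation.ReflTransGen.refl

lemma mem_reachIn_of_link {P : E → Prop} {W : Set V} {r a b : V} {e : E}
    (ha : a ∈ G.reachIn P W r) (he : P e) (hl : G.Link e a b) (haW : a ∈ W) (hbW : b ∈ W) :
    b ∈ G.reachIn P W r :=
  Reaches.step ha ⟨he, (hl.mem_within_iff (S := W)).2 ⟨haW, hbW⟩⟩ hl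

lemma reachIn_subset {P : E → Prop} {W : Set V} {r : V} (hr : r ∈ W) : G.reachIn P W r ⊆ W := by
  intro u hu
  refine Reaches.mem_of_closed hu hr fun e a b he hl _ => ?_
  exact ((hl.mem_within_iff (S := W)).1 he.2).2

lemma connectedOn_of_reachIn_eq {P : E → Prop} {W : Set V} {r : V} (h : G.reachIn P W r = W) :
    G.ConnectedOn W P := by
  intro u hu v hv
  rw [← h] at hu hv
  exact Reaches.trans (Reaches.symm hu) hv

/-- Connectedness of an induced subgraph in terms of its cuts. -/
lemma connectedOn_iff {P : E → Prop} {W : Set V} : G.ConnectedOn W P ↔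
    ∀ S ⊆ W, S.Nonempty → (W \ S).Nonempty → ∃ e a b, P e ∧ G.Link e a b ∧ a ∈ S ∧ b ∈ W \ S := by
  constructor
  · rintro h S hS ⟨u, hu⟩ ⟨v, hv, hvS⟩
    obtain ⟨e, a, b, he, hl, ha, hb⟩ := (h u (hS hu) v hv).exists_exit hu hvS
    exact ⟨e, a, b, he.1, hl, ha, ((hl.mem_within_iff (S := W)).1 he.2).2, hb⟩
  · intro h u hu v hv
    by_contra hnot
    obtain ⟨e, a, b, he, hl, ha, hb, hb'⟩ := h (G.reachIn P W u) (reachIn_subset hu)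
      ⟨u, self_mem_reachIn⟩ ⟨v, hv, hnot⟩
    exact hb' (mem_reachIn_of_link ha he hl (reachIn_subset hu ha) hb)

end Connectivity

/-- A walk from `t` to a vertex satisfying `T` contains a path from `t` whose only vertex
satisfying `T` is its last one. -/
lemma Reaches.exists_isPath {G : Multigraph V E} {F : Set E} {t w : V} {T : V → Prop}
    (h : G.Reaches (· ∈ F) t w) (hw : T w) (ht : ¬ T t) :
    ∃ (n : ℕ) (vs : Fin (n + 1 + 1) → V) (es : Fin (n + 1) → E), G.IsPath vs es ∧ vs 0 = t ∧
      T (vs (Fin.last (n + 1))) ∧ (∀ i, es i ∈ F) ∧ ∀ i, i ≠ Fin.last (n + 1) → ¬ T (vs i) := by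
  let H : SimpleGraph V :=
    { Adj := fun a b => a ≠ b ∧ ∃ e ∈ F, G.Link e a b
      symm := ⟨fun a b ⟨hab, e, he, hl⟩ => ⟨hab.symm, e, he, hl.symm⟩⟩
      loopless := ⟨fun a h => h.1 rfl⟩ }
  have hreach : H.Reachable t w := by
    clear hw
    induction h with
    | refl => exact SimpleGraph.Reachable.refl _
    | @tail a b _ hab ih =>
      obtain ⟨e, he, hl⟩ := hab
      by_cases hab : a = b
      · exact hab ▸ ih
      · exact ih.trans (SimpleGraph.Adj.reachable (show H.Adj a b from ⟨hab, e, he, hl⟩))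
  have hex : ∃ m, ∃ w', T w' ∧ ∃ p : H.Walk t w', p.length = m :=
    hreach.elim fun p => ⟨_, w, hw, p, rfl⟩
  obtain ⟨w', hw', p₀, hp₀⟩ := Nat.find_spec hex
  have hmin : ∀ w'', T w'' → ∀ q : H.Walk t w'', p₀.length ≤ q.length :=
    fun w'' h'' q => hp₀ ▸ Nat.find_min' hex ⟨w'', h'', q, rfl⟩
  obtain ⟨p, hp, hplen⟩ : ∃ p : H.Walk t w', p.IsPath ∧ p.length ≤ p₀.length :=
    ⟨p₀.bypass, p₀.bypass_isPath, p₀.length_bypass_le_length⟩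
  have hpos : p.length ≠ 0 := fun h0 => ht (SimpleGraph.Walk.eq_of_length_eq_zero h0 ▸ hw')
  obtain ⟨n, hn⟩ := Nat.exists_eq_succ_of_ne_zero hpos
  have hadj : ∀ i : Fin (n + 1), ∃ e ∈ F, G.Link e (p.getVert i) (p.getVert (i + 1)) :=
    fun i => (p.adj_getVert_succ (by omega : (i : ℕ) < p.length)).2
  choose es hesF hes using hadj
  have hinj : Function.Injective fun i : Fin (n + 1 + 1) => p.getVert i := by
    intro i j hij
    exact Fin.ext (hp.getVert_injOn (by simp; omega) (by simp; omega) hij)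
  refine ⟨n, fun i => p.getVert i, es, ⟨hinj, ?_, ?_⟩, by simp, ?_, hesF, ?_⟩
  · intro i j hij
    have hi := hes i
    have hj := hes j
    rw [← hij] at hj
    have hk : ∀ a b : ℕ, a ≤ n + 1 → b ≤ n + 1 → p.getVert a = p.getVert b → a = b :=
      fun a b ha hb hab => hp.getVert_injOn (by simp; omega) (by simp; omega) hab
    have := i.2
    have := j.2
    rcases hi with ⟨h1, h2⟩ | ⟨h1, h2⟩ <;> rcases hj with ⟨h3, h4⟩ | ⟨h3, h4⟩
    · exact Fin.ext (hk _ _ (by omega) (by omega) (h1.symm.trans h3))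
    · have := hk _ _ (by omega) (by omega) (h1.symm.trans h3)
      have := hk _ _ (by omega) (by omega) (h2.symm.trans h4)
      omega
    · have := hk _ _ (by omega) (by omega) (h1.symm.trans h3)
      have := hk _ _ (by omega) (by omega) (h2.symm.trans h4)
      omega
    · exact Fin.ext (hk _ _ (by omega) (by omega) (h2.symm.trans h4))
  · intro i
    exact hes i
  · have : p.getVert (n + 1) = w' := by
      rw [show n + 1 = p.length from hn.symm, SimpleGraph.Walk.getVert_length]
    simpa [this] using hw'
  · intro i hi hT
    have hilt : (i : ℕ) < n + 1 := Fin.val_lt_last hi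
    have := hmin _ hT (p.take i)
    have hl : (p.take i).length ≤ i := by simp
    omega

lemma nonempty_edge_of_cubic {G : Multigraph V E} (hcubic : G.Cubic) (v : V) : Nonempty E := by
  by_contra h
  rw [not_nonempty_iff] at h
  have := hcubic v
  simp [degree, Set.eq_empty_of_isEmpty] at this

/-- An edge set `F` joining `t` to `T` inside a bridgeless part can be rerouted so as to enlarge
the component `K` of its complement containing `t`, without using new edges inside `K`. -/
lemma exists_reroute [Fintype V] [Fintype E] {G : Multigraph V E} (hcubic : G.Cubic)
    (hcyc : G.CyclicallyEdgeConnected 4) {W T : Set V} (hW : G.BridgelessOn W) {F : Set E}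
    (hF : F ⊆ G.within W) {t w : V} (ht : t ∈ W) (hT : ∀ v ∈ T, G.OnBoundary W v)
    (hK : ∀ v ∈ W, G.OnBoundary W v → v ∈ T ∨ v ∈ G.reachIn (· ∉ F) W t)
    (hw : w ∈ T) (hreach : G.Reaches (· ∈ F) t w) (hne : G.reachIn (· ∉ F) W t ≠ W) :
    ∃ F' ⊆ G.within W, (∀ e ∈ F', e ∈ G.within (G.reachIn (· ∉ F) W t) → e ∈ F) ∧
      (∃ w' ∈ T, G.Reaches (· ∈ F') t w') ∧
      G.reachIn (· ∉ F) W t ⊂ G.reachIn (· ∉ F') W t := by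
  set K := G.reachIn (· ∉ F) W t
  have hKW : K ⊆ W := reachIn_subset ht
  have htK : t ∈ K := self_mem_reachIn
  have hUne : (W \ K).Nonempty := by
    by_contra h
    rw [Set.not_nonempty_iff_eq_empty, Set.sdiff_eq_empty] at h
    exact hne (hKW.antisymm h)
  suffices hsuff : ∃ F' ⊆ G.within W, (∀ e ∈ F', e ∈ G.within K → e ∈ F) ∧
      (∃ w' ∈ T, G.Reaches (· ∈ F') t w') ∧
      ∃ e a b, e ∉ F' ∧ G.Link e a b ∧ a ∈ K ∧ b ∈ W \ K by
    obtain ⟨F', h1, h2, h3, e, a, b, he, hl, ha, hb⟩ := hsuff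
    have hsub : K ⊆ G.reachIn (· ∉ F') W t := by
      intro u hu
      have : u ∈ K ∩ G.reachIn (· ∉ F') W t := by
        refine Reaches.mem_of_closed hu ⟨htK, self_mem_reachIn⟩ ?_
        rintro e a b ⟨he, heW⟩ hl ⟨ha, ha'⟩
        have hab := (hl.mem_within_iff (S := W)).1 heW
        have hb : b ∈ K := mem_reachIn_of_link ha he hl hab.1 hab.2
        exact ⟨hb, mem_reachIn_of_link ha'
          (fun h => he (h2 e h (hl.mem_within_iff.2 ⟨ha, hb⟩))) hl hab.1 hab.2⟩
      exact this.2
    refine ⟨F', h1, h2, h3, hsub, fun h => hb.2 (h ?_)⟩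
    exact mem_reachIn_of_link (hsub ha) he hl (hKW ha) hb.1
  by_cases hwC : w ∈ G.reachIn (· ∈ F) K t
  · obtain ⟨e₀⟩ := nonempty_edge_of_cubic hcubic t
    obtain ⟨e, a, b, -, hl, ha, hb⟩ := hW K hKW ⟨t, htK⟩ hUne e₀
    refine ⟨F ∩ G.within K, fun e he => hF he.1, fun e he _ => he.1, ⟨w, hw, hwC⟩,
      e, a, b, fun h => ?_, hl, ha, hb⟩
    exact hb.2 (hl.mem_within_iff.1 h.2).2
  obtain ⟨e₁, a, u, he₁, hl₁, ha, hu⟩ := hreach.exists_exit (S := G.reachIn (· ∈ F) K t)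
    self_mem_reachIn hwC
  have haK : a ∈ K := reachIn_subset htK ha
  have huW : u ∈ W := (hl₁.mem_within_iff.1 (hF he₁)).2
  have huK : u ∉ K := fun h => hu (mem_reachIn_of_link ha he₁ hl₁ haK h)
  set D := G.reachIn (fun _ => True) (W \ K) u
  have huD : u ∈ D := self_mem_reachIn
  have hDU : D ⊆ W \ K := reachIn_subset ⟨huW, huK⟩
  have hDK : ∀ e c d, G.Link e c d → c ∈ D → d ∈ W → d ∉ D → d ∈ K := by
    intro e c d hl hc hd hdD
    by_contra hdK
    exact hdD (mem_reachIn_of_link hc trivial hl (hDU hc) ⟨hd, hdK⟩)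
  have hUK : ∀ e ∈ G.within (W \ K), e ∉ G.within K := fun e h h' => h.1.2 h'.1
  by_cases hDb : ∃ d ∈ D, G.OnBoundary W d
  · obtain ⟨d, hd, hdb⟩ := hDb
    have hdT : d ∈ T := (hK d (hDU hd).1 hdb).resolve_right (hDU hd).2
    obtain ⟨e, a', b, hee, hl, ha', hb⟩ := hW K hKW ⟨t, htK⟩ hUne e₁
    refine ⟨(F ∩ G.within K) ∪ {e₁} ∪ G.within (W \ K), ?_, ?_, ⟨d, hdT, ?_⟩, e, a', b, ?_, hl,
      ha', hb⟩
    · rintro e ((he | rfl) | he)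
      exacts [hF he.1, hF he₁, ⟨he.1.1, he.2.1⟩]
    · rintro e ((he | rfl) | he) heK
      exacts [he.1, he₁, absurd heK (hUK e he)]
    · have h1 : G.Reaches (· ∈ (F ∩ G.within K) ∪ {e₁} ∪ G.within (W \ K)) t a :=
        Reaches.mono (fun e he => .inl (.inl he)) ha
      exact (h1.step (.inl (.inr rfl)) hl₁).trans (Reaches.mono (fun e he => .inr he.2) hd)
    · rintro ((he | he) | he)
      exacts [hb.2 (hl.mem_within_iff.1 he.2).2, hee he, (hl.mem_within_iff.1 he).1.2 ha']
  push Not at hDb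
  have htD : t ∈ Dᶜ := fun h => (hDU h).2 htK
  have hwD : w ∈ Dᶜ := fun h => hDb w h (hT w hw)
  by_cases hwt : w ∈ G.reachIn (· ∈ F) Dᶜ t
  · refine ⟨F ∩ G.within Dᶜ, fun e he => hF he.1, fun e he _ => he.1, ⟨w, hw, hwt⟩,
      e₁, a, u, fun h => ?_, hl₁, haK, huW, huK⟩
    exact (hl₁.mem_within_iff.1 h.2).2 huD
  obtain ⟨g₁, a₁, b₁, hg₁, hlg₁, ha₁, hb₁⟩ := hreach.exists_exit (S := G.reachIn (· ∈ F) Dᶜ t)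
    self_mem_reachIn hwt
  obtain ⟨g₂, a₂, b₂, hg₂, hlg₂, ha₂, hb₂⟩ := hreach.symm.exists_exit
    (S := G.reachIn (· ∈ F) Dᶜ w) self_mem_reachIn (fun h => hwt (Reaches.symm h))
  have hb₁D : b₁ ∈ D := by
    by_contra h
    exact hb₁ (mem_reachIn_of_link ha₁ hg₁ hlg₁ (reachIn_subset htD ha₁) h)
  have hb₂D : b₂ ∈ D := by
    by_contra h
    exact hb₂ (mem_reachIn_of_link ha₂ hg₂ hlg₂ (reachIn_subset hwD ha₂) h)
  obtain ⟨e, heD, heg⟩ : ∃ e ∈ G.cutEdges D, e ∉ ({g₁, g₂} : Set E) := by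
    by_contra! h
    have h1 := Set.ncard_le_ncard (s := G.cutEdges D) (t := {g₁, g₂}) h
    have h2 := three_le_cut hcubic hcyc (S := D) ⟨u, huD⟩ ⟨t, htD⟩
    have h3 := Set.ncard_insert_le g₁ {g₂}
    rw [Set.ncard_singleton] at h3
    omega
  obtain ⟨d, c, hl, hd, hc⟩ := exists_link_of_mem_cutEdges heD
  have hcK : c ∈ K := hDK e d c hl hd (mem_of_link_of_not_onBoundary hl (hDU hd).1 (hDb d hd)) hc
  refine ⟨(F ∩ G.within Dᶜ) ∪ {g₁, g₂} ∪ G.within (W \ K), ?_, ?_, ⟨w, hw, ?_⟩, e, c, d, ?_,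
    hl.symm, hcK, hDU hd⟩
  · rintro e ((he | rfl | rfl) | he)
    exacts [hF he.1, hF hg₁, hF hg₂, ⟨he.1.1, he.2.1⟩]
  · rintro e ((he | rfl | rfl) | he) heK
    exacts [he.1, hg₁, hg₂, absurd heK (hUK e he)]
  · have h1 : G.Reaches (· ∈ (F ∩ G.within Dᶜ) ∪ {g₁, g₂} ∪ G.within (W \ K)) t a₁ :=
      Reaches.mono (fun e he => .inl (.inl he)) ha₁
    have h2 : G.Reaches (· ∈ (F ∩ G.within Dᶜ) ∪ {g₁, g₂} ∪ G.within (W \ K)) w a₂ :=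
      Reaches.mono (fun e he => .inl (.inl he)) ha₂
    have h3 : G.Reaches (· ∈ (F ∩ G.within Dᶜ) ∪ {g₁, g₂} ∪ G.within (W \ K)) b₁ b₂ :=
      Reaches.mono (fun e he => .inr he.2) (Reaches.trans (Reaches.symm hb₁D) hb₂D)
    exact ((h1.step (.inl (.inr (.inl rfl))) hlg₁).trans h3).trans
      (h2.step (.inl (.inr (.inr rfl))) hlg₂).symm
  · rintro ((he | he) | he)
    exacts [(hl.mem_within_iff.1 he.2).1 hd, heg he, (hl.mem_within_iff.1 he).2.2 hcK]

lemma IsPath.reaches {G : Multigraph V E} {n : ℕ} {vs : Fin (n + 1) → V} {es : Fin n → E}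
    (h : G.IsPath vs es) (i : Fin (n + 1)) : G.Reaches (· ∈ Set.range es) (vs 0) (vs i) := by
  induction i using Fin.induction with
  | zero => exact Relation.ReflTransGen.refl
  | succ i ih => exact ih.step ⟨i, rfl⟩ (h.2.2 i)

lemma PeripheralPath.reaches_src {G : Multigraph V E} {W : Set V} {z y y' : V} {R : Set E}
    (h : G.PeripheralPath W z y y' R) {e : E} (he : e ∈ R) : G.Reaches (· ∈ R) y (G.src e) := by
  obtain ⟨n, vs, es, hp, rfl, -, rfl, -⟩ := h
  obtain ⟨i, rfl⟩ := he
  rcases hp.2.2 i with h | h <;> rw [h.1] <;> exact hp.reaches _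

lemma PeripheralPath.touches {G : Multigraph V E} {W : Set V} {z y y' : V} {R : Set E}
    (h : G.PeripheralPath W z y y' R) : G.touches R y' := by
  obtain ⟨n, vs, es, hp, -, rfl, rfl, -⟩ := h
  exact ⟨es (Fin.last n), ⟨_, rfl⟩, (Link.symm (hp.2.2 (Fin.last n))).incident⟩

lemma PeripheralPath.subset_within {G : Multigraph V E} {W : Set V} {z y y' : V} {R : Set E}
    (h : G.PeripheralPath W z y y' R) : R ⊆ G.within W := by
  obtain ⟨n, vs, es, hp, -, -, rfl, hW, -⟩ := h
  rintro _ ⟨i, rfl⟩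
  exact (Link.mem_within_iff (hp.2.2 i)).2 ⟨(hW _).1, (hW _).1⟩

/-- If `A` is a connected edge set containing `t` and the boundary vertices `z` and `q`, and `t` is
joined to some further boundary vertex by edges outside `A`, then there is such a connection which
is a peripheral path. -/
lemma exists_peripheralPath [Fintype V] [Fintype E] {G : Multigraph V E} (hcubic : G.Cubic)
    (hcyc : G.CyclicallyEdgeConnected 4) {W : Set V} (hW : G.BridgelessOn W) {t z q w₀ : V}
    (ht : t ∈ W) (htz : t ≠ z) (hz : G.OnBoundary W z)
    {A F₀ : Set E} (hAW : A ⊆ G.within W) (hA : ∀ e ∈ A, G.Reaches (· ∈ A) t (G.src e))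
    (hzA : G.touches A z) (hqA : G.touches A q) (hF₀W : F₀ ⊆ G.within W) (hF₀ : Disjoint F₀ A)
    (hw₀W : w₀ ∈ W) (hw₀ : G.OnBoundary W w₀) (hw₀t : w₀ ≠ t) (hw₀z : w₀ ≠ z) (hw₀q : w₀ ≠ q)
    (hreach : G.Reaches (· ∈ F₀) t w₀) :
    ∃ w R, (w ∈ W ∧ G.OnBoundary W w ∧ w ≠ t ∧ w ≠ z ∧ w ≠ q) ∧
      G.PeripheralPath W z t w R ∧ Disjoint R A := by
  set T : Set V := {v | v ∈ W ∧ G.OnBoundary W v ∧ v ≠ t ∧ v ≠ z ∧ v ≠ q}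
  obtain ⟨F, ⟨hFW, hFA, w, hw, hFw⟩, hmax⟩ := Set.exists_max_image
    {F : Set E | F ⊆ G.within W ∧ Disjoint F A ∧ ∃ w ∈ T, G.Reaches (· ∈ F) t w}
    (fun F => (G.reachIn (· ∉ F) W t).ncard) (Set.toFinite _)
    ⟨F₀, hF₀W, hF₀, w₀, ⟨hw₀W, hw₀, hw₀t, hw₀z, hw₀q⟩, hreach⟩
  have hAF : ∀ e ∈ A, e ∉ F := fun e he h => Set.disjoint_left.1 hFA h he
  have hAK : A ⊆ G.within (G.reachIn (· ∉ F) W t) := by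
    intro e he
    have h1 : G.src e ∈ G.reachIn (· ∉ F) W t :=
      Reaches.mono (fun e he => ⟨hAF e he, hAW he⟩) (hA e he)
    exact ⟨h1, mem_reachIn_of_link h1 (hAF e he) (G.link_self e) (hAW he).1 (hAW he).2⟩
  have htouch : ∀ v, G.touches A v → v ∈ G.reachIn (· ∉ F) W t := by
    rintro v ⟨e, he, rfl | rfl⟩
    exacts [(hAK he).1, (hAK he).2]
  have hKW : G.reachIn (· ∉ F) W t = W := by
    by_contra hne
    obtain ⟨F', hF'W, hF'K, hF'T, hss⟩ := exists_reroute hcubic hcyc hW hFW ht (T := T)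
      (fun v hv => hv.2.1) (fun v hv hvb => by
        by_cases h1 : v = t
        · exact .inr (h1 ▸ self_mem_reachIn)
        by_cases h2 : v = z
        · exact .inr (h2 ▸ htouch z hzA)
        by_cases h3 : v = q
        · exact .inr (h3 ▸ htouch q hqA)
        exact .inl ⟨hv, hvb, h1, h2, h3⟩) hw hFw hne
    have h1 := hmax F' ⟨hF'W, Set.disjoint_left.2 fun e he heA =>
      hAF e heA (hF'K e he (hAK heA)), hF'T⟩
    exact absurd (Set.ncard_lt_ncard hss) (not_lt.2 h1)
  obtain ⟨n, vs, es, hp, hvs0, hlast, hes, hmid⟩ := hFw.exists_isPath (T := (· ∈ T)) hw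
    (fun h => h.2.2.1 rfl)
  have hvsW : ∀ i, vs i ∈ W := by
    intro i
    induction i using Fin.cases with
    | zero => exact hvs0 ▸ ht
    | succ i => exact ((Link.mem_within_iff (hp.2.2 i)).1 (hFW (hes i))).2
  have hinner : ∀ i, i ≠ 0 → i ≠ Fin.last (n + 1) → G.OnBoundary W (vs i) →
      ¬ G.touches A (vs i) := by
    rintro i hi0 hil ⟨e, he, hev⟩ ⟨e', he', hev'⟩
    obtain ⟨j, rfl⟩ := Fin.exists_succ_eq.2 hi0
    obtain ⟨k, hk⟩ := Fin.exists_castSucc_eq.2 hil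
    have hjk : es j ≠ es k := fun h => by
      have := hp.2.1 h
      subst this
      simp [Fin.ext_iff] at hk
    have hcut : ∀ e'' ∈ G.within W, e'' ≠ e := fun e'' h h' =>
      notMem_within_of_mem_cutEdges he (h' ▸ h)
    have hcard : ({es j, es k, e', e} : Finset E).card = 4 := by
      rw [Finset.card_insert_of_notMem, Finset.card_insert_of_notMem,
        Finset.card_insert_of_notMem, Finset.card_singleton]
      · simpa using hcut e' (hAW he')
      · simp only [Finset.mem_insert, Finset.mem_singleton, not_or]
        exact ⟨fun h => hAF e' he' (h ▸ hes k), hcut _ (hFW (hes k))⟩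
      · simp only [Finset.mem_insert, Finset.mem_singleton, not_or]
        exact ⟨hjk, fun h => hAF e' he' (h ▸ hes j), hcut _ (hFW (hes j))⟩
    have := card_le_three_of_incident hcubic (vs j.succ) {es j, es k, e', e} (by
      simp only [Finset.mem_insert, Finset.mem_singleton]
      rintro _ (rfl | rfl | rfl | rfl)
      · exact (Link.symm (hp.2.2 j)).incident
      · exact hk ▸ Link.incident (hp.2.2 k)
      · exact hev'
      · exact hev)
    omega
  have hinner' : ∀ i, i ≠ 0 → i ≠ Fin.last (n + 1) → ¬ G.OnBoundary W (vs i) := by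
    intro i hi0 hil hb
    have hA' := hinner i hi0 hil hb
    refine hmid i hil ⟨hvsW i, hb, fun h => hi0 (hp.1 (h.trans hvs0.symm)), ?_, ?_⟩
    exacts [fun h => hA' (h ▸ hzA), fun h => hA' (h ▸ hqA)]
  have hRF : Set.range es ⊆ F := by
    rintro _ ⟨i, rfl⟩
    exact hes i
  refine ⟨_, Set.range es, hlast, ⟨n, vs, es, hp, hvs0, rfl, rfl, fun i => ⟨hvsW i, ?_⟩, ?_,
    hinner'⟩, hFA.mono_left hRF⟩
  · by_cases hi0 : i = 0
    · rw [hi0, hvs0]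
      exact htz
    by_cases hil : i = Fin.last (n + 1)
    · exact hil ▸ hlast.2.2.2.1
    · exact fun h => hinner' i hi0 hil (h ▸ hz)
  · intro u hu v hv
    exact Reaches.mono (fun e he => ⟨fun h => he.1 (hRF h), he.2⟩)
      (connectedOn_of_reachIn_eq hKW u hu v hv)

lemma Link.left_unique {G : Multigraph V E} {e : E} {a c v : V} (h : G.Link e a v)
    (h' : G.Link e c v) : a = c := by
  rcases h with ⟨rfl, rfl⟩ | ⟨rfl, rfl⟩ <;> rcases h' with ⟨h1, h2⟩ | ⟨h1, h2⟩ <;> simp_all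

lemma BridgelessOn.exists_two_links {G : Multigraph V E} {W S : Set V} (hW : G.BridgelessOn W)
    (e₀ : E) (hS : S ⊆ W) (hne : S.Nonempty) (hne' : (W \ S).Nonempty) :
    ∃ e₁ e₂ a₁ b₁ a₂ b₂, e₁ ≠ e₂ ∧ (G.Link e₁ a₁ b₁ ∧ a₁ ∈ S ∧ b₁ ∈ W \ S) ∧
      (G.Link e₂ a₂ b₂ ∧ a₂ ∈ S ∧ b₂ ∈ W \ S) := by
  obtain ⟨e₁, a₁, b₁, -, h₁⟩ := hW S hS hne hne' e₀
  obtain ⟨e₂, a₂, b₂, h, h₂⟩ := hW S hS hne hne' e₁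
  exact ⟨e₁, e₂, a₁, b₁, a₂, b₂, h.symm, h₁, h₂⟩

/-- In a cubic graph, a bridgeless induced subgraph has no cut vertex. -/
lemma BridgelessOn.exists_link_diff_singleton [Fintype E] {G : Multigraph V E} (hcubic : G.Cubic)
    {W B : Set V} (hW : G.BridgelessOn W) {v : V} (hv : v ∈ W) (hB : B ⊆ W \ {v})
    (hne : B.Nonempty) (hne' : ((W \ {v}) \ B).Nonempty) :
    ∃ e a b, G.Link e a b ∧ a ∈ B ∧ b ∈ (W \ {v}) \ B := by
  by_contra! hno
  obtain ⟨e₀⟩ := nonempty_edge_of_cubic hcubic v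
  have hvB : v ∉ B := fun h => (hB h).2 rfl
  obtain ⟨e₁, e₂, a₁, b₁, a₂, b₂, h12, ⟨hl₁, ha₁, hb₁⟩, hl₂, ha₂, hb₂⟩ :=
    hW.exists_two_links e₀ (hB.trans Set.sdiff_subset) hne ⟨v, hv, hvB⟩
  obtain ⟨e₃, e₄, a₃, b₃, a₄, b₄, h34, ⟨hl₃, ha₃, hb₃⟩, hl₄, ha₄, hb₄⟩ :=
    hW.exists_two_links e₀ (Set.sdiff_subset.trans Set.sdiff_subset) hne'
      ⟨v, hv, fun h => h.1.2 rfl⟩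
  have hend : ∀ e a b, G.Link e a b → a ∈ B → b ∈ W \ B → b = v := by
    intro e a b hl ha hb
    by_contra hbv
    exact hno e a b hl ha ⟨⟨hb.1, hbv⟩, hb.2⟩
  have hend' : ∀ e a b, G.Link e a b → a ∈ (W \ {v}) \ B → b ∈ W \ ((W \ {v}) \ B) → b = v := by
    intro e a b hl ha hb
    by_contra hbv
    have hbB : b ∈ B := by
      by_contra hbB
      exact hb.2 ⟨⟨hb.1, hbv⟩, hbB⟩
    exact hno e b a hl.symm hbB ha
  rw [hend _ _ _ hl₁ ha₁ hb₁] at hl₁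
  rw [hend _ _ _ hl₂ ha₂ hb₂] at hl₂
  rw [hend' _ _ _ hl₃ ha₃ hb₃] at hl₃
  rw [hend' _ _ _ hl₄ ha₄ hb₄] at hl₄
  have hdiff : ∀ e e' a a', G.Link e a v → G.Link e' a' v → a ∈ B → a' ∈ (W \ {v}) \ B →
      e ≠ e' := by
    rintro e e' a a' hl hl' ha ha' rfl
    exact ha'.2 (hl.left_unique hl' ▸ ha)
  have hcard : ({e₁, e₂, e₃, e₄} : Finset E).card = 4 := by
    rw [Finset.card_insert_of_notMem, Finset.card_insert_of_notMem,
      Finset.card_insert_of_notMem, Finset.card_singleton]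
    · simpa using h34
    · simp only [Finset.mem_insert, Finset.mem_singleton, not_or]
      exact ⟨hdiff _ _ _ _ hl₂ hl₃ ha₂ ha₃, hdiff _ _ _ _ hl₂ hl₄ ha₂ ha₄⟩
    · simp only [Finset.mem_insert, Finset.mem_singleton, not_or]
      exact ⟨h12, hdiff _ _ _ _ hl₁ hl₃ ha₁ ha₃, hdiff _ _ _ _ hl₁ hl₄ ha₁ ha₄⟩
  have := card_le_three_of_incident hcubic v {e₁, e₂, e₃, e₄} (by
    simp only [Finset.mem_insert, Finset.mem_singleton]
    rintro _ (rfl | rfl | rfl | rfl)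
    exacts [hl₁.symm.incident, hl₂.symm.incident, hl₃.symm.incident, hl₄.symm.incident])
  omega

lemma ConnectedOn.insert {G : Multigraph V E} {D : Set V} (hD : G.ConnectedOn D fun _ => True)
    {e : E} {a v : V} (hl : G.Link e a v) (ha : a ∈ D) :
    G.ConnectedOn (insert v D) fun _ => True := by
  refine connectedOn_of_reachIn_eq (r := a) ((reachIn_subset (.inr ha)).antisymm ?_)
  rintro u (rfl | hu)
  · exact mem_reachIn_of_link self_mem_reachIn trivial hl (.inr ha) (.inl rfl)
  · exact Reaches.mono (fun e he => ⟨trivial, .inr he.2.1, .inr he.2.2⟩) (hD a ha u hu)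

/-- A partition of a bridgeless part into two connected sides `D` and `W \ D` can be changed by
moving to `D` a vertex of `W \ D` different from a prescribed vertex `r`. -/
lemma BridgelessOn.exists_shift [Fintype V] [Fintype E] {G : Multigraph V E} (hcubic : G.Cubic)
    {W D : Set V} (hW : G.BridgelessOn W) (hDW : D ⊆ W) (hne : D.Nonempty)
    (hD : G.ConnectedOn D fun _ => True) (hC : G.ConnectedOn (W \ D) fun _ => True) {r s : V}
    (hr : r ∈ W \ D) (hs : s ∈ W \ D) (hsr : s ≠ r) :
    ∃ v ∈ W \ D, v ≠ r ∧ G.ConnectedOn (insert v D) (fun _ => True) ∧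
      G.ConnectedOn (W \ insert v D) fun _ => True := by
  obtain ⟨v, ⟨hv, hvr, e, a, hl, ha⟩, hmax⟩ := Set.exists_max_image
    {v | v ∈ W \ D ∧ v ≠ r ∧ ∃ e a, G.Link e a v ∧ a ∈ D}
    (fun v => (G.reachIn (fun _ => True) (W \ insert v D) r).ncard) (Set.toFinite _) (by
      obtain ⟨e, a, b, hl, ha, hb⟩ := hW.exists_link_diff_singleton hcubic hr.1 (B := D)
        (fun u hu => ⟨hDW hu, fun h => hr.2 (h ▸ hu)⟩) hne ⟨s, ⟨hs.1, hsr⟩, hs.2⟩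
      exact ⟨b, ⟨hb.1.1, hb.2⟩, hb.1.2, e, a, hl, ha⟩)
  refine ⟨v, hv, hvr, hD.insert hl ha, connectedOn_of_reachIn_eq (r := r) ?_⟩
  by_contra hMne
  set M := G.reachIn (fun _ => True) (W \ insert v D) r
  have hr' : r ∈ W \ insert v D := ⟨hr.1, by rintro (h | h); exacts [hvr h.symm, hr.2 h]⟩
  have hMC : M ⊆ W \ insert v D := reachIn_subset hr'
  have hrM : r ∈ M := self_mem_reachIn
  have hMcl : ∀ e c d, G.Link e c d → c ∈ M → d ∈ W \ insert v D → d ∈ M :=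
    fun e c d hl hc hd => mem_reachIn_of_link hc trivial hl (hMC hc) hd
  have hBne : ((W \ insert v D) \ M).Nonempty := by
    by_contra h
    rw [Set.not_nonempty_iff_eq_empty, Set.sdiff_eq_empty] at h
    exact hMne (hMC.antisymm h)
  obtain ⟨e', u, b, hl', hu, hb⟩ := hW.exists_link_diff_singleton hcubic hv.1
    (B := (W \ insert v D) \ M) (fun u hu => ⟨hu.1.1, fun h => hu.1.2 (.inl h)⟩) hBne
    ⟨r, ⟨hr.1, hvr.symm⟩, fun h => h.2 hrM⟩
  have hbD : b ∈ D := by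
    by_contra hbD
    have hb' : b ∈ W \ insert v D := ⟨hb.1.1, by rintro (h | h); exacts [hb.1.2 h, hbD h]⟩
    have hbM : b ∈ M := by
      by_contra hbM
      exact hb.2 ⟨hb', hbM⟩
    exact hu.2 (hMcl e' b u hl'.symm hbM hu.1)
  have huv : u ≠ v := fun h => hu.1.2 (.inl h)
  have hle := hmax u ⟨⟨hu.1.1, fun h => hu.1.2 (.inr h)⟩, fun h => hu.2 (h ▸ hrM), e', b,
    hl'.symm, hbD⟩
  have hMu : ∀ c ∈ M, c ∈ W \ insert u D := fun c hc => ⟨(hMC hc).1, by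
    rintro (h | h)
    exacts [hu.2 (h ▸ hc), (hMC hc).2 (.inr h)]⟩
  have hsub : M ⊆ G.reachIn (fun _ => True) (W \ insert u D) r := by
    intro c hc
    have : c ∈ M ∩ G.reachIn (fun _ => True) (W \ insert u D) r := by
      refine Reaches.mem_of_closed hc ⟨hrM, self_mem_reachIn⟩ ?_
      rintro e c d ⟨-, he⟩ hl ⟨hcM, hc'⟩
      have hdM : d ∈ M :=
        hMcl e c d hl hcM ((hl.mem_within_iff (S := W \ Insert.insert v D)).1 he).2
      exact ⟨hdM, mem_reachIn_of_link hc' trivial hl (hMu c hcM) (hMu d hdM)⟩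
    exact this.2
  have hvM : v ∉ M := fun h => (hMC h).2 (.inl rfl)
  obtain ⟨e'', c, d, ⟨-, he''⟩, hl'', hc, hd⟩ := (hC r hr v hv).exists_exit hrM hvM
  have hdC : d ∈ W \ D := ((hl''.mem_within_iff (S := W \ D)).1 he'').2
  have hdv : d = v := by
    by_contra hdv
    exact hd (hMcl e'' c d hl'' hc ⟨hdC.1, by rintro (h | h); exacts [hdv h, hdC.2 h]⟩)
  subst hdv
  have hss : M ⊂ G.reachIn (fun _ => True) (W \ insert u D) r :=
    ⟨hsub, fun h => hvM (h (mem_reachIn_of_link (hsub hc) trivial hl'' (hMu c hc)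
      ⟨hv.1, by rintro (h | h); exacts [huv h.symm, hv.2 h]⟩))⟩
  exact absurd (Set.ncard_lt_ncard hss) (not_lt.2 hle)

/-- There are two edge-disjoint peripheral paths in `W - z` from a common boundary vertex to two
further distinct boundary vertices. -/
def HasTwoPeripheralPaths (G : Multigraph V E) (W : Set V) (z : V) : Prop :=
  ∃ y y₁ y₂ R₁ R₂, y ≠ y₁ ∧ y ≠ y₂ ∧ y₁ ≠ y₂ ∧ G.OnBoundary W y ∧ G.OnBoundary W y₁ ∧
    G.OnBoundary W y₂ ∧ G.PeripheralPath W z y y₁ R₁ ∧ G.PeripheralPath W z y y₂ R₂ ∧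
    Disjoint R₁ R₂

/-- A bridgeless part with a boundary vertex `z` and three further boundary vertices splits into
two connected sides, overlapping in a boundary vertex `t` only, with the edge `e` from `z` added to
the side not containing `z`, such that each side has another boundary vertex. -/
lemma BridgelessOn.exists_split [Fintype V] [Fintype E] {G : Multigraph V E} (hcubic : G.Cubic)
    {W Y : Set V} (hW : G.BridgelessOn W) {z : V} (hz : z ∈ W) (hYW : Y ⊆ W) (hzY : z ∉ Y)
    (hY : 3 ≤ Y.ncard) : ∃ D ⊆ W, ∃ t y q e r, z ∈ D ∧ G.Link e z r ∧ r ∈ W \ insert t D ∧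
      t ∈ Y ∧ t ∉ D ∧ y ∈ Y ∧ y ∈ D ∧ q ∈ Y ∧ q ∉ insert t D ∧
      G.ConnectedOn (insert t D) (fun _ => True) ∧ G.ConnectedOn (W \ D) fun _ => True := by
  obtain ⟨e₀⟩ := nonempty_edge_of_cubic hcubic z
  obtain ⟨s, hs⟩ := Set.nonempty_of_ncard_ne_zero (s := Y) (by omega)
  obtain ⟨e, z', r, -, hl, rfl, hr⟩ := hW {z} (Set.singleton_subset_iff.2 hz) ⟨z, rfl⟩
    ⟨s, hYW hs, fun h => hzY (h ▸ hs)⟩ e₀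
  obtain ⟨D, ⟨hzD, hDW, hrD, hD, hC, hDY⟩, hmax⟩ := Set.exists_max_image
    {D : Set V | z' ∈ D ∧ D ⊆ W ∧ r ∉ D ∧ G.ConnectedOn D (fun _ => True) ∧
      G.ConnectedOn (W \ D) (fun _ => True) ∧ (D ∩ Y).ncard ≤ 1} (fun D => D.ncard)
    (Set.toFinite _) (by
      refine ⟨{z'}, rfl, Set.singleton_subset_iff.2 hz, hr.2, ?_, ?_, ?_⟩
      · rintro _ rfl _ rfl
        exact Relation.ReflTransGen.refl
      · rw [connectedOn_iff]
        intro S hS hne hne'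
        obtain ⟨e, a, b, h⟩ := hW.exists_link_diff_singleton hcubic hz hS hne hne'
        exact ⟨e, a, b, trivial, h⟩
      · exact (Set.ncard_le_ncard Set.inter_subset_left).trans (Set.ncard_singleton _).le)
  obtain ⟨s', hs', hs'r⟩ : ∃ s' ∈ W \ D, s' ≠ r := by
    by_contra! h
    have h1 : Y ⊆ insert r (D ∩ Y) := by
      intro v hv
      by_cases hvD : v ∈ D
      · exact .inr ⟨hvD, hv⟩
      · exact .inl (h v ⟨hYW hv, hvD⟩)
    have h2 := Set.ncard_le_ncard h1
    have h3 := Set.ncard_insert_le r (D ∩ Y)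
    omega
  obtain ⟨t, ht, htr, hD', hC'⟩ := hW.exists_shift hcubic hDW ⟨z', hzD⟩ hD hC ⟨hr.1, hrD⟩ hs' hs'r
  have hrD' : r ∉ insert t D := by
    rintro (h | h)
    exacts [htr h.symm, hrD h]
  have hbig : ¬ (insert t D ∩ Y).ncard ≤ 1 := by
    intro h
    have h1 := hmax (insert t D) ⟨.inr hzD, Set.insert_subset ht.1 hDW, hrD', hD', hC', h⟩
    rw [Set.ncard_insert_of_notMem ht.2] at h1
    omega
  have htY : t ∈ Y := by
    by_contra htY
    rw [Set.insert_inter_of_notMem htY] at hbig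
    exact hbig hDY
  rw [Set.insert_inter_of_mem htY] at hbig
  obtain ⟨y, hyD, hyY⟩ : (D ∩ Y).Nonempty := by
    by_contra h
    rw [Set.not_nonempty_iff_eq_empty] at h
    rw [h] at hbig
    simp at hbig
  obtain ⟨q, hqY, hq⟩ : ∃ q ∈ Y, q ∉ insert t D := by
    by_contra! h
    have h1 : Y ⊆ insert t (D ∩ Y) := fun v hv => (h v hv).imp id fun h => ⟨h, hv⟩
    have h2 := Set.ncard_le_ncard h1
    have h3 := Set.ncard_insert_le t (D ∩ Y)
    omega
  exact ⟨D, hDW, t, y, q, e, r, hzD, hl, ⟨hr.1, hrD'⟩, htY, ht.2, hyY, hyD, hqY, hq, hD', hC⟩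

lemma BridgelessOn.hasTwoPeripheralPaths [Fintype V] [Fintype E] {G : Multigraph V E}
    (hcubic : G.Cubic) (hcyc : G.CyclicallyEdgeConnected 4) {W : Set V} (hW : G.BridgelessOn W)
    {z : V} (hz : z ∈ W) (hzb : G.OnBoundary W z)
    (hY : 3 ≤ {v | v ∈ W ∧ G.OnBoundary W v ∧ v ≠ z}.ncard) : G.HasTwoPeripheralPaths W z := by
  obtain ⟨D, hDW, t, y, q, g, r, hzD, hg, ⟨hrW, hrD⟩, ⟨htW, htb, htz⟩, htD, ⟨hyW, hyb, hyz⟩, hyD,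
    ⟨hqW, hqb, hqz⟩, hqD, hD, hC⟩ := hW.exists_split hcubic hz
      (Y := {v | v ∈ W ∧ G.OnBoundary W v ∧ v ≠ z}) (fun v hv => hv.1) (fun h => h.2.2 rfl) hY
  have hDW' : insert t D ⊆ W := Set.insert_subset htW hDW
  have htC : t ∈ W \ D := ⟨htW, htD⟩
  set A : Set E := G.within (insert t D) \ G.within (W \ D)
  set B : Set E := insert g (G.within (W \ D))
  have hAW : A ⊆ G.within W := fun e he => ⟨hDW' he.1.1, hDW' he.1.2⟩
  have hBW : B ⊆ G.within W := by
    rintro e (rfl | he)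
    exacts [hg.mem_within_iff.2 ⟨hz, hrW⟩, ⟨he.1.1, he.2.1⟩]
  have hAB : Disjoint A B := by
    rw [Set.disjoint_left]
    rintro e he (rfl | he')
    exacts [hrD (hg.mem_within_iff.1 he.1).2, he.2 he']
  have hAreach : ∀ u ∈ insert t D, G.Reaches (· ∈ A) t u := by
    intro u hu
    refine (hD t (.inl rfl) u hu).mem_of_closed (S := {u | G.Reaches (· ∈ A) t u})
      Relation.ReflTransGen.refl ?_
    rintro e a b ⟨-, he⟩ hl ha
    by_cases he' : e ∈ G.within (W \ D)
    · have hb := ((hl.mem_within_iff (S := insert t D)).1 he).2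
      rw [hb.resolve_right (hl.mem_within_iff.1 he').2.2]
      exact Relation.ReflTransGen.refl
    · exact Reaches.step ha ⟨he, he'⟩ hl
  have hBreach : ∀ u ∈ W \ D, G.Reaches (· ∈ B) t u := fun u hu =>
    Reaches.mono (fun e he => .inr he.2) (hC t htC u hu)
  have hBr : G.Reaches (· ∈ B) t r := hBreach r ⟨hrW, fun h => hrD (.inr h)⟩
  have hA : ∀ e ∈ A, G.Reaches (· ∈ A) t (G.src e) := fun e he => hAreach _ he.1.1
  have hB : ∀ e ∈ B, G.Reaches (· ∈ B) t (G.src e) := by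
    rintro e (rfl | he)
    · rcases hg with h | h
      · exact h.1.symm ▸ hBr.step (.inl rfl) (.inr h)
      · exact h.1.symm ▸ hBr
    · exact hBreach _ he.1
  have hqt : q ≠ t := fun h => hqD (.inl h)
  have hyt : y ≠ t := fun h => htD (h ▸ hyD)
  have hAz : G.touches A z := (hAreach z (.inr hzD)).exists_incident htz
  have hBq : G.touches B q := (hBreach q ⟨hqW, fun h => hqD (.inr h)⟩).exists_incident hqt.symm
  obtain ⟨y₁, R₁, ⟨-, hy₁b, hy₁t, -, hy₁q⟩, hP₁, hR₁⟩ := exists_peripheralPath hcubic hcyc hW htW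
    htz hzb (q := q) hBW hB ⟨g, .inl rfl, hg.incident⟩ hBq hAW hAB hyW hyb hyt hyz
    (fun h => hqD (.inr (h ▸ hyD))) (hAreach y (.inr hyD))
  obtain ⟨y₂, R₂, ⟨-, hy₂b, hy₂t, -, hy₂⟩, hP₂, hR₂⟩ := exists_peripheralPath hcubic hcyc hW htW
    htz hzb (q := y₁) (A := R₁ ∪ A) (Set.union_subset hP₁.subset_within hAW) (by
      rintro e (he | he)
      exacts [(hP₁.reaches_src he).mono fun _ => .inl, (hA e he).mono fun _ => .inr])
    (hAz.imp fun e he => ⟨.inr he.1, he.2⟩) (hP₁.touches.imp fun e he => ⟨.inl he.1, he.2⟩)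
    hBW (Set.disjoint_union_right.2 ⟨hR₁.symm, hAB.symm⟩) hqW hqb hqt hqz hy₁q.symm
    (hBreach q ⟨hqW, fun h => hqD (.inr h)⟩)
  exact ⟨t, y₁, y₂, R₁, R₂, hy₁t.symm, hy₂t.symm, hy₂.symm, htb, hy₁b, hy₂b, hP₁, hP₂,
    (Set.disjoint_union_right.1 hR₂).1.symm⟩

lemma PeripheralPath.mem_left {G : Multigraph V E} {W : Set V} {z y y' : V} {R : Set E}
    (h : G.PeripheralPath W z y y' R) : y ∈ W ∧ y ≠ z := by
  obtain ⟨n, vs, es, -, rfl, -, -, hW, -⟩ := h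
  exact hW 0

lemma PeripheralPath.mem_right {G : Multigraph V E} {W : Set V} {z y y' : V} {R : Set E}
    (h : G.PeripheralPath W z y y' R) : y' ∈ W ∧ y' ≠ z := by
  obtain ⟨n, vs, es, -, -, rfl, -, hW, -⟩ := h
  exact hW _

/-- If each vertex of a bridgeless part `W` has at most one boundary edge other than the edge `f`
at `z`, then at least three vertices other than `z` lie on the boundary. -/
lemma BridgelessOn.three_le_boundary [Fintype V] [Fintype E] {G : Multigraph V E}
    (hcubic : G.Cubic) (hcyc : G.CyclicallyEdgeConnected 4) {W : Set V} (hW : G.BridgelessOn W)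
    {z : V} {f : E} (hz : z ∈ W) (hWc : 2 ≤ Wᶜ.ncard) (hf : f ∈ G.cutEdges W)
    (hfz : G.src f = z ∨ G.tgt f = z)
    (hdeg : ∀ v ∈ W,
      {e | e ≠ f ∧ e ∈ G.cutEdges W ∧ (G.src e = v ∨ G.tgt e = v)}.ncard ≤ 1) :
    3 ≤ {v | v ∈ W ∧ G.OnBoundary W v ∧ v ≠ z}.ncard := by
  obtain ⟨s, hs, hsz⟩ : ∃ s ∈ W, s ≠ z := by
    by_contra! h
    have h1 : G.cutEdges W ⊆
        insert f {e | e ≠ f ∧ e ∈ G.cutEdges W ∧ (G.src e = z ∨ G.tgt e = z)} := by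
      intro e he
      obtain ⟨a, b, hl, ha, -⟩ := exists_link_of_mem_cutEdges he
      by_cases hef : e = f
      · exact .inl hef
      · exact .inr ⟨hef, he, h a ha ▸ hl.incident⟩
    have h2 := (Set.ncard_le_ncard h1).trans (Set.ncard_insert_le _ _)
    have h3 := three_le_cut hcubic hcyc (S := W) ⟨z, hz⟩
      (Set.nonempty_of_ncard_ne_zero (by omega))
    have h4 := hdeg z hz
    omega
  have hW2 : 2 ≤ W.ncard := (Set.one_lt_ncard (s := W)).2 ⟨s, hs, z, hz, hsz⟩
  have hfour := four_le_cut hcubic hcyc hW2 hWc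
  obtain ⟨e₁, e₂, a₁, b₁, a₂, b₂, hne, ⟨hl₁, rfl, hb₁⟩, hl₂, ha₂, hb₂⟩ :=
    hW.exists_two_links f (Set.singleton_subset_iff.2 hz) ⟨z, rfl⟩ ⟨s, hs, hsz⟩
  obtain rfl : a₂ = a₁ := ha₂
  have hz' : ∀ e ∈ G.cutEdges W, (G.src e = a₂ ∨ G.tgt e = a₂) → e = f := by
    intro e he hez
    by_contra hef
    have hcut : ∀ e' ∈ G.within W, ∀ e ∈ G.cutEdges W, e' ≠ e := fun e' h e he h' =>
      notMem_within_of_mem_cutEdges he (h' ▸ h)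
    have h₁ : e₁ ∈ G.within W := hl₁.mem_within_iff.2 ⟨hz, hb₁.1⟩
    have h₂ : e₂ ∈ G.within W := hl₂.mem_within_iff.2 ⟨hz, hb₂.1⟩
    have hcard : ({e₁, e₂, e, f} : Finset E).card = 4 := by
      rw [Finset.card_insert_of_notMem, Finset.card_insert_of_notMem,
        Finset.card_insert_of_notMem, Finset.card_singleton]
      · simpa using hef
      · simp only [Finset.mem_insert, Finset.mem_singleton, not_or]
        exact ⟨hcut _ h₂ _ he, hcut _ h₂ _ hf⟩
      · simp only [Finset.mem_insert, Finset.mem_singleton, not_or]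
        exact ⟨hne, hcut _ h₁ _ he, hcut _ h₁ _ hf⟩
    have := card_le_three_of_incident hcubic a₂ {e₁, e₂, e, f} (by
      simp only [Finset.mem_insert, Finset.mem_singleton]
      rintro _ (rfl | rfl | rfl | rfl)
      exacts [hl₁.incident, hl₂.incident, hez, hfz])
    omega
  have hend : ∀ e ∈ G.cutEdges W, ∃ a ∈ W, G.src e = a ∨ G.tgt e = a := by
    intro e he
    obtain ⟨a, b, hl, ha, -⟩ := exists_link_of_mem_cutEdges he
    exact ⟨a, ha, hl.incident⟩
  have : Nonempty V := ⟨a₂⟩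
  choose! φ hφW hφ using hend
  have hle := Set.ncard_le_ncard_of_injOn (s := G.cutEdges W \ {f})
    (t := {v | v ∈ W ∧ G.OnBoundary W v ∧ v ≠ a₂}) φ
    (fun e he => ⟨hφW e he.1, ⟨e, he.1, hφ e he.1⟩, fun h => he.2 (hz' e he.1 (h ▸ hφ e he.1))⟩)
    (fun e he e' he' h => (Set.ncard_le_one (Set.toFinite _)).1 (hdeg (φ e) (hφW e he.1))
      e ⟨he.2, he.1, hφ e he.1⟩ e' ⟨he'.2, he'.1, h ▸ hφ e' he'.1⟩)
  have := Set.ncard_sdiff_singleton_add_one hf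
  omega

/-- Peripheral paths in a part `B` attached to the rest of `W` by a single edge `g` at `a` are
peripheral in `W`. -/
lemma HasTwoPeripheralPaths.of_bridge {G : Multigraph V E} {W B : Set V} {z a b : V} {g : E}
    (h : G.HasTwoPeripheralPaths B a) (hBW : B ⊆ W) (hzB : z ∉ B)
    (hconn : G.ConnectedOn W fun _ => True) (hg : G.Link g a b) (hb : b ∉ B)
    (hcut : ∀ e ∈ G.cutEdges B, e ≠ g → e ∈ G.cutEdges W) : G.HasTwoPeripheralPaths W z := by
  have hbd : ∀ v ∈ B, G.OnBoundary W v → G.OnBoundary B v := by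
    rintro v hv ⟨e, he, hev⟩
    refine ⟨e, ?_, hev⟩
    rcases he with ⟨h1, h2⟩ | ⟨h1, h2⟩ <;> rcases hev with rfl | rfl
    exacts [.inl ⟨hv, fun h => h2 (hBW h)⟩, absurd (hBW hv) h2, absurd (hBW hv) h1,
      .inr ⟨fun h => h1 (hBW h), hv⟩]
  have hbd' : ∀ v, v ∈ B ∧ v ≠ a → G.OnBoundary B v → G.OnBoundary W v := by
    rintro v ⟨hv, hva⟩ ⟨e, he, hev⟩
    refine ⟨e, hcut e he ?_, hev⟩
    rintro rfl
    have hvb : v ≠ b := fun h => hb (h ▸ hv)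
    rcases hg with ⟨h1, h2⟩ | ⟨h1, h2⟩ <;> rcases hev with h3 | h3
    exacts [hva (h3.symm.trans h1), hvb (h3.symm.trans h2), hvb (h3.symm.trans h1),
      hva (h3.symm.trans h2)]
  have hpath : ∀ y y' R, G.PeripheralPath B a y y' R → G.PeripheralPath W z y y' R := by
    intro y y' R hP
    have hRB := hP.subset_within
    obtain ⟨n, vs, es, hp, h0, hlast, hR, hvs, hper, hmid⟩ := hP
    refine ⟨n, vs, es, hp, h0, hlast, hR,
      fun i => ⟨hBW (hvs i).1, fun h => hzB (h ▸ (hvs i).1)⟩, ?_,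
      fun i hi hi' h => hmid i hi hi' (hbd _ (hvs i).1 h)⟩
    rw [connectedOn_iff] at hconn hper ⊢
    intro S hS hne hne'
    by_cases hSB : (B ∩ S).Nonempty ∧ (B \ (B ∩ S)).Nonempty
    · obtain ⟨e, c, d, he, hl, hc, hd⟩ := hper (B ∩ S) Set.inter_subset_left hSB.1 hSB.2
      exact ⟨e, c, d, he, hl, hc.2, hBW hd.1, fun h => hd.2 ⟨hd.1, h⟩⟩
    · obtain ⟨e, c, d, -, hl, hc, hd⟩ := hconn S hS hne hne'
      refine ⟨e, c, d, fun he => hSB ?_, hl, hc, hd⟩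
      have hcd := hl.mem_within_iff.1 (hRB he)
      exact ⟨⟨c, hcd.1, hc⟩, d, hcd.2, fun h => hd.2 h.2⟩
  obtain ⟨y, y₁, y₂, R₁, R₂, h1, h2, h3, hy, hy₁, hy₂, hP₁, hP₂, hdisj⟩ := h
  exact ⟨y, y₁, y₂, R₁, R₂, h1, h2, h3, hbd' y hP₁.mem_left hy, hbd' y₁ hP₁.mem_right hy₁,
    hbd' y₂ hP₂.mem_right hy₂, hpath _ _ _ hP₁, hpath _ _ _ hP₂, hdisj⟩

theorem hasTwoPeripheralPaths [Fintype V] [Fintype E] {G : Multigraph V E}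
    (hcubic : G.Cubic) (hcyc : G.CyclicallyEdgeConnected 4) {W : Set V} {z : V} {f : E}
    (hconn : G.ConnectedOn W fun _ => True) (hz : z ∈ W) (hWc : 2 ≤ Wᶜ.ncard)
    (hf : f ∈ G.cutEdges W) (hfz : G.src f = z ∨ G.tgt f = z)
    (hdeg : ∀ v ∈ W,
      {e | e ≠ f ∧ e ∈ G.cutEdges W ∧ (G.src e = v ∨ G.tgt e = v)}.ncard ≤ 1) :
    G.HasTwoPeripheralPaths W z := by
  induction hn : W.ncard using Nat.strong_induction_on generalizing W z f with
  | _ n ih =>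
  by_cases hW : G.BridgelessOn W
  · exact hW.hasTwoPeripheralPaths hcubic hcyc hz ⟨f, hf, hfz⟩
      (hW.three_le_boundary hcubic hcyc hz hWc hf hfz hdeg)
  obtain ⟨B, hBW, hBne, hzB, g, hg⟩ : ∃ B ⊆ W, B.Nonempty ∧ z ∉ B ∧ ∃ g, ∀ e a b,
      G.Link e a b → a ∈ B → b ∈ W \ B → e = g := by
    simp only [BridgelessOn] at hW
    push Not at hW
    obtain ⟨S, hS, hne, hne', g, hg⟩ := hW
    by_cases hzS : z ∈ S
    · refine ⟨W \ S, Set.sdiff_subset, hne', fun h => h.2 hzS, g, fun e a b hl ha hb => ?_⟩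
      by_contra he
      exact hg e b a he hl.symm (by_contra fun h => hb.2 ⟨hb.1, h⟩) ha
    · refine ⟨S, hS, hne, hzS, g, fun e a b hl ha hb => ?_⟩
      by_contra he
      exact hg e a b he hl ha hb
  rw [connectedOn_iff] at hconn
  obtain ⟨g', a, b, -, hl, ha, hb⟩ := hconn B hBW hBne ⟨z, hz, hzB⟩
  obtain rfl := hg g' a b hl ha hb
  have hga : ∀ e c d, G.Link e c d → c ∈ B → d ∈ W \ B → c = a := by
    intro e c d hl' hc hd
    obtain rfl := hg e c d hl' hc hd
    rcases hl with ⟨rfl, rfl⟩ | ⟨rfl, rfl⟩ <;> rcases hl' with ⟨rfl, rfl⟩ | ⟨rfl, rfl⟩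
    exacts [rfl, absurd ha hd.2, absurd ha hd.2, rfl]
  have hBconn : G.ConnectedOn B fun _ => True := by
    rw [connectedOn_iff]
    rintro S hS hne ⟨u, huB, huS⟩
    by_cases haS : a ∈ S
    · obtain ⟨e, c, d, -, hl', hc, hd, hd'⟩ := hconn (B \ S) (Set.sdiff_subset.trans hBW)
        ⟨u, huB, huS⟩ ⟨z, hz, fun h => hzB h.1⟩
      have hdB : d ∈ B := by
        by_contra hdB
        exact hc.2 (hga e c d hl' hc.1 ⟨hd, hdB⟩ ▸ haS)
      exact ⟨e, d, c, trivial, hl'.symm, by_contra fun h => hd' ⟨hdB, h⟩, hc⟩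
    · obtain ⟨e, c, d, -, hl', hc, hd, hd'⟩ := hconn S (hS.trans hBW) hne
        ⟨z, hz, fun h => hzB (hS h)⟩
      have hdB : d ∈ B := by
        by_contra hdB
        exact haS (hga e c d hl' (hS hc) ⟨hd, hdB⟩ ▸ hc)
      exact ⟨e, c, d, trivial, hl', hc, hdB, hd'⟩
  have hcut : ∀ e ∈ G.cutEdges B, e ≠ g' → e ∈ G.cutEdges W ∧ e ≠ f := by
    intro e he hne
    obtain ⟨c, d, hl', hc, hd⟩ := exists_link_of_mem_cutEdges he
    have hdW : d ∉ W := fun h => hne (hg e c d hl' hc ⟨h, hd⟩)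
    refine ⟨hl'.mem_cutEdges (hBW hc) hdW, ?_⟩
    rintro rfl
    rcases hl' with ⟨rfl, rfl⟩ | ⟨rfl, rfl⟩ <;> rcases hfz with rfl | rfl
    exacts [hzB hc, hdW hz, hdW hz, hzB hc]
  have hss : B ⊂ W := ⟨hBW, fun h => hzB (h hz)⟩
  refine (ih B.ncard (hn ▸ Set.ncard_lt_ncard hss) hBconn ha
    (hWc.trans (Set.ncard_le_ncard (Set.compl_subset_compl.2 hBW)))
    (hl.mem_cutEdges ha hb.2) hl.incident (fun v hv => ?_) rfl).of_bridge hBW hzB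
    (connectedOn_iff.2 hconn) hl hb.2 fun e he hne => (hcut e he hne).1
  refine (Set.ncard_le_ncard fun e he => ?_).trans (hdeg v (hBW hv))
  exact ⟨(hcut e he.2.1 he.1).2, (hcut e he.2.1 he.1).1, he.2.2⟩

end Multigraph

open Multigraph

/-- In a cyclically 4-edge-connected cubic graph `G`, given `X ⊂ V` with `|X| ≥ 2`, a
component `H` of `G − X` (vertex set `W`), and an edge `f = xz` with `x ∈ X`, `z ∈ W`,
if `|E(v,X) \ {f}| ≤ 1` for every `v ∈ W`, then there are distinct vertices
`y, y₁, y₂ ∈ W \ {z}`, each sending an edge to `X`, and for `i = 1,2` a path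
`Pᵢ ⊆ H − z` from `y` to `yᵢ` that is peripheral in `H` and has no internal vertex with
a neighbour in `X`; moreover `P₁` and `P₂` use different edges at `y`. -/
theorem two_peripheral_paths_lemma {V E : Type} [Fintype V] [Fintype E]
    (G : Multigraph V E) (hcubic : G.Cubic) (hcyc : G.CyclicallyEdgeConnected 4)
    (X : Set V) (hX2 : 2 ≤ X.ncard) (hXproper : X ≠ Set.univ)
    (W : Set V) (hW : G.IsComponent X W)
    (f : E) (x z : V) (hx : x ∈ X) (hz : z ∈ W)
    (hf : (G.src f = x ∧ G.tgt f = z) ∨ (G.src f = z ∧ G.tgt f = x))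
    (hdeg : ∀ v ∈ W, ({e : E | e ≠ f ∧ G.joins e v X}).ncard ≤ 1) :
    ∃ y y₁ y₂ : V, y ∈ W ∧ y₁ ∈ W ∧ y₂ ∈ W ∧
      y ≠ z ∧ y₁ ≠ z ∧ y₂ ≠ z ∧ y ≠ y₁ ∧ y ≠ y₂ ∧ y₁ ≠ y₂ ∧
      (∃ e : E, G.joins e y X) ∧ (∃ e : E, G.joins e y₁ X) ∧ (∃ e : E, G.joins e y₂ X) ∧
      ∃ (n₁ n₂ : ℕ) (vs₁ : Fin (n₁ + 1 + 1) → V) (es₁ : Fin (n₁ + 1) → E)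
        (vs₂ : Fin (n₂ + 1 + 1) → V) (es₂ : Fin (n₂ + 1) → E),
        G.IsPath vs₁ es₁ ∧ G.IsPath vs₂ es₂ ∧
        vs₁ 0 = y ∧ vs₁ (Fin.last (n₁ + 1)) = y₁ ∧
        vs₂ 0 = y ∧ vs₂ (Fin.last (n₂ + 1)) = y₂ ∧
        (∀ i, vs₁ i ∈ W ∧ vs₁ i ≠ z) ∧ (∀ i, vs₂ i ∈ W ∧ vs₂ i ≠ z) ∧
        G.ConnectedOn W (fun e => e ∉ Set.range es₁) ∧
        G.ConnectedOn W (fun e => e ∉ Set.range es₂) ∧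
        (∀ i : Fin (n₁ + 1 + 1), i ≠ 0 → i ≠ Fin.last (n₁ + 1) →
          ∀ e : E, ¬ G.joins e (vs₁ i) X) ∧
        (∀ i : Fin (n₂ + 1 + 1), i ≠ 0 → i ≠ Fin.last (n₂ + 1) →
          ∀ e : E, ¬ G.joins e (vs₂ i) X) ∧
        es₁ 0 ≠ es₂ 0 := by
  obtain ⟨-, hdisj, hcomp, hreach⟩ := hW
  have hnX : ∀ v ∈ W, v ∉ X := fun v hv => Set.disjoint_left.1 hdisj hv
  have hjoins : ∀ e, ∀ v ∈ W, G.joins e v X ↔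
      e ∈ G.cutEdges W ∧ (G.src e = v ∨ G.tgt e = v) := by
    intro e v hv
    constructor
    · rintro (⟨rfl, h⟩ | ⟨rfl, h⟩)
      exacts [⟨.inl ⟨hv, fun h' => hnX _ h' h⟩, .inl rfl⟩,
        ⟨.inr ⟨fun h' => hnX _ h' h, hv⟩, .inr rfl⟩]
    · rintro ⟨he, rfl | rfl⟩
      · refine .inl ⟨rfl, by_contra fun h => ?_⟩
        have ht := hcomp _ hv _ h ⟨e, trivial, G.link_self e⟩
        rcases he with he | he
        exacts [he.2 ht, he.1 hv]
      · refine .inr ⟨rfl, by_contra fun h => ?_⟩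
        have hs := hcomp _ hv _ h ⟨e, trivial, (G.link_self e).symm⟩
        rcases he with he | he
        exacts [he.2 hv, he.1 hs]
  have hboundary : ∀ v ∈ W, G.OnBoundary W v ↔ ∃ e, G.joins e v X := fun v hv =>
    exists_congr fun e => (hjoins e v hv).symm
  have hconn : G.ConnectedOn W fun _ => True := by
    rw [connectedOn_iff]
    rintro S hS ⟨u, hu⟩ ⟨v, hv, hvS⟩
    obtain ⟨e, a, b, he, hl, ha, hb⟩ := (hreach u (hS hu) v hv).exists_exit hu hvS
    have hbX : b ∉ X := ((hl.mem_within_iff (S := Xᶜ)).1 he).2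
    exact ⟨e, a, b, trivial, hl, ha, hcomp a (hS ha) b hbX ⟨e, trivial, hl⟩, hb⟩
  have hfz : G.joins f z X := by
    rcases hf with ⟨rfl, rfl⟩ | ⟨rfl, rfl⟩
    exacts [.inr ⟨rfl, hx⟩, .inl ⟨rfl, hx⟩]
  rw [hjoins f z hz] at hfz
  have hdeg' : ∀ v ∈ W,
      {e | e ≠ f ∧ e ∈ G.cutEdges W ∧ (G.src e = v ∨ G.tgt e = v)}.ncard ≤ 1 := by
    intro v hv
    refine (Set.ncard_le_ncard fun e he => ?_).trans (hdeg v hv)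
    exact ⟨he.1, (hjoins e v hv).2 he.2⟩
  obtain ⟨y, y₁, y₂, R₁, R₂, h1, h2, h3, hy, hy₁, hy₂, hP₁, hP₂, hR⟩ :=
    hasTwoPeripheralPaths hcubic hcyc hconn hz
      (hX2.trans (Set.ncard_le_ncard fun v hv hvW => hnX v hvW hv)) hfz.1 hfz.2 hdeg'
  obtain ⟨hyW, hyz⟩ := hP₁.mem_left
  obtain ⟨hy₁W, hy₁z⟩ := hP₁.mem_right
  obtain ⟨hy₂W, hy₂z⟩ := hP₂.mem_right
  obtain ⟨n₁, vs₁, es₁, hp₁, h0₁, hl₁, rfl, hvs₁, hper₁, hmid₁⟩ := hP₁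
  obtain ⟨n₂, vs₂, es₂, hp₂, h0₂, hl₂, rfl, hvs₂, hper₂, hmid₂⟩ := hP₂
  exact ⟨y, y₁, y₂, hyW, hy₁W, hy₂W, hyz, hy₁z, hy₂z, h1, h2, h3, (hboundary y hyW).1 hy,
    (hboundary y₁ hy₁W).1 hy₁, (hboundary y₂ hy₂W).1 hy₂, n₁, n₂, vs₁, es₁, vs₂, es₂, hp₁, hp₂,
    h0₁, hl₁, h0₂, hl₂, hvs₁, hvs₂, hper₁, hper₂,
    fun i hi hi' e he => hmid₁ i hi hi' ((hboundary _ (hvs₁ i).1).2 ⟨e, he⟩),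
    fun i hi hi' e he => hmid₂ i hi hi' ((hboundary _ (hvs₂ i).1).2 ⟨e, he⟩),
    fun h => Set.disjoint_left.1 hR ⟨0, rfl⟩ ⟨0, h.symm⟩⟩
end

section
/- Let G be a 3-edge-connected cubic graph and let C ⊆ G be a peripheral cycle. Then there exists a peripheral 2-base B ⊆ E(G) with E(C) ⊆ B. -/
open scoped Classical

section Linked

variable {V : Type} {r : V → V → Prop} {Y Z T : Set V}

/-- The vertex set `Y` is connected with respect to the relation `r` restricted to `Y`:
a set meeting `Y` and closed under `r`-steps inside `Y` contains `Y`. -/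
def IsLinked (r : V → V → Prop) (Y : Set V) : Prop :=
  ∀ A : Set V, (∃ x ∈ Y, x ∈ A) → (∀ u ∈ Y, u ∈ A → ∀ v ∈ Y, r u v → v ∈ A) → Y ⊆ A

theorem isLinked_singleton (x : V) : IsLinked r {x} := by
  rintro A ⟨y, rfl, hy⟩ _ z rfl
  exact hy

theorem IsLinked.mono {r' : V → V → Prop} (h : IsLinked r Y)
    (hrr : ∀ u ∈ Y, ∀ v ∈ Y, r u v → r' u v) : IsLinked r' Y :=
  fun A hA hcl => h A hA fun u hu huA v hv huv => hcl u hu huA v hv (hrr u hu v hv huv)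

theorem IsLinked.exists_step (h : IsLinked r Y) {A : Set V} {x y : V} (hx : x ∈ Y) (hxA : x ∈ A)
    (hy : y ∈ Y) (hyA : y ∉ A) : ∃ u ∈ Y, u ∈ A ∧ ∃ v ∈ Y, v ∉ A ∧ r u v := by
  by_contra! hcon
  refine hyA (h A ⟨x, hx, hxA⟩ (fun u hu huA v hv huv => ?_) hy)
  by_contra hvA
  exact hcon u hu huA v hv hvA huv

theorem IsLinked.union (hr : ∀ u v, r u v → r v u) (hY : IsLinked r Y) (hZ : IsLinked r Z)
    {y z : V} (hy : y ∈ Y) (hz : z ∈ Z) (hyz : r y z) : IsLinked r (Y ∪ Z) := by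
  rintro A ⟨x, hx, hxA⟩ hcl
  have hYA : ∀ w ∈ Y, w ∈ A → Y ⊆ A := fun w hw hwA => hY A ⟨w, hw, hwA⟩
    fun u hu huA v hv huv => hcl u (.inl hu) huA v (.inl hv) huv
  have hZA : ∀ w ∈ Z, w ∈ A → Z ⊆ A := fun w hw hwA => hZ A ⟨w, hw, hwA⟩
    fun u hu huA v hv huv => hcl u (.inr hu) huA v (.inr hv) huv
  rcases hx with hx | hx
  · have h := hYA x hx hxA
    exact Set.union_subset h (hZA z hz (hcl y (.inl hy) (h hy) z (.inr hz) hyz))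
  · have h := hZA x hx hxA
    exact Set.union_subset (hYA y hy (hcl z (.inr hz) (h hz) y (.inl hy) (hr _ _ hyz))) h

/-- Removing from a connected set a union of components of the complement of a nonempty connected
subset leaves it connected. -/
theorem IsLinked.sdiff (hr : ∀ u v, r u v → r v u) (hY : IsLinked r Y) (hZ : IsLinked r Z)
    (hZY : Z ⊆ Y) (hZne : Z.Nonempty) (hTZ : Disjoint T Z)
    (hT : ∀ u ∈ T, ∀ v ∈ Y, v ∉ Z → r u v → v ∈ T) : IsLinked r (Y \ T) := by
  obtain ⟨z, hz⟩ := hZne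
  have hzT : ∀ w ∈ Z, w ∉ T := fun w hw hwT => Set.disjoint_left.1 hTZ hwT hw
  have key : ∀ B : Set V, (∀ w ∈ Z, w ∉ B) →
      (∀ u ∈ Y \ T, u ∈ B → ∀ v ∈ Y \ T, r u v → v ∈ B) → ∀ x ∈ Y \ T, x ∉ B := by
    intro B hB hcl x hx hxB
    have h := hY (B \ T) ⟨x, hx.1, hxB, hx.2⟩ (by
      rintro u hu ⟨huB, huT⟩ v hv huv
      have hvT : v ∉ T := fun hvT =>
        huT (hT v hvT u hu (fun huZ => hB u huZ huB) (hr _ _ huv))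
      exact ⟨hcl u ⟨hu, huT⟩ huB v ⟨hv, hvT⟩ huv, hvT⟩)
    exact hB z hz (h (hZY hz)).1
  rintro A ⟨x, hx, hxA⟩ hcl
  by_cases hAZ : ∃ w ∈ Z, w ∈ A
  · have hZA : Z ⊆ A := hZ A hAZ fun u hu huA v hv huv =>
      hcl u ⟨hZY hu, hzT u hu⟩ huA v ⟨hZY hv, hzT v hv⟩ huv
    intro y hy
    by_contra hyA
    exact key Aᶜ (fun w hw hwA => hwA (hZA hw))
      (fun u hu huA v hv huv hvA => huA (hcl v hv hvA u hu (hr _ _ huv))) y hy hyA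
  · push Not at hAZ
    exact absurd hxA (key A hAZ hcl x hx)

/-- A connected set containing a point of `T` stays inside `T` if `T` has no step out. -/
theorem IsLinked.subset_of_closed (hZ : IsLinked r Z) (hZY : Z ⊆ Y)
    (hT : ∀ u ∈ T, ∀ v ∈ Y, r u v → v ∈ T) {x : V} (hxZ : x ∈ Z) (hxT : x ∈ T) : Z ⊆ T :=
  hZ T ⟨x, hxZ, hxT⟩ fun u _ huT v hv huv => hT u huT v (hZY hv) huv

theorem IsLinked.exists_component [Finite V] (hr : ∀ u v, r u v → r v u) (hZ : IsLinked r Z)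
    (hZY : Z ⊆ Y) : ∃ T, Z ⊆ T ∧ T ⊆ Y ∧ IsLinked r T ∧ ∀ u ∈ T, ∀ v ∈ Y, r u v → v ∈ T := by
  obtain ⟨T, hZT, hT⟩ := (Set.toFinite {T | T ⊆ Y ∧ IsLinked r T}).exists_le_maximal
    (a := Z) ⟨hZY, hZ⟩
  refine ⟨T, hZT, hT.prop.1, hT.prop.2, fun u hu v hv huv => ?_⟩
  have h := hT.le_of_ge (y := T ∪ {v})
    ⟨Set.union_subset hT.prop.1 (by simpa using hv),
      hT.prop.2.union hr (isLinked_singleton v) hu rfl huv⟩ Set.subset_union_left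
  exact h (.inr rfl)

theorem IsLinked.exists_linked_diff_singleton [Finite V] (hr : ∀ u v, r u v → r v u)
    (hY : IsLinked r Y) {x y : V} (hx : x ∈ Y) (hy : y ∈ Y) (hxy : x ≠ y) :
    ∃ v ∈ Y, IsLinked r (Y \ {v}) := by
  obtain ⟨T, hxT, hT⟩ := (Set.toFinite {T | T ⊂ Y ∧ IsLinked r T}).exists_le_maximal
    (a := {x}) ⟨(Set.ssubset_iff_of_subset (by simpa using hx)).2 ⟨y, hy, by simpa using hxy.symm⟩,
      isLinked_singleton x⟩
  obtain ⟨z, hz, hzT⟩ := Set.exists_of_ssubset hT.prop.1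
  obtain ⟨u, -, huT, v, hv, hvT, huv⟩ := hY.exists_step hx (hxT rfl) hz hzT
  have hlink := hT.prop.2.union hr (isLinked_singleton v) huT rfl huv
  have hsub : T ∪ {v} ⊆ Y := Set.union_subset hT.prop.1.subset (by simpa using hv)
  have heq : T ∪ {v} = Y := by
    by_contra hne
    exact hvT (hT.le_of_ge (y := T ∪ {v}) ⟨hsub.ssubset_of_ne hne, hlink⟩
      Set.subset_union_left (.inr rfl))
  refine ⟨v, hv, ?_⟩
  rw [← heq, Set.union_sdiff_right, Set.sdiff_singleton_eq_self hvT]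
  exact hT.prop.2

end Linked

namespace Multigraph

variable {V E : Type}

/-- The edge `e` has endpoints `u` and `v`. -/
def Ends (G : Multigraph V E) (e : E) (u v : V) : Prop :=
  (G.src e = u ∧ G.tgt e = v) ∨ (G.src e = v ∧ G.tgt e = u)

/-- The edges with both endpoints in `X`. -/
def inside (G : Multigraph V E) (X : Set V) : Set E :=
  {e | G.src e ∈ X ∧ G.tgt e ∈ X}

variable {G : Multigraph V E}

theorem Ends.symm {e : E} {u v : V} (h : G.Ends e u v) : G.Ends e v u := Or.symm h

theorem Ends.mem_inside {e : E} {u v : V} {X : Set V} (h : G.Ends e u v) (hu : u ∈ X)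
    (hv : v ∈ X) : e ∈ G.inside X := by
  rcases h with ⟨rfl, rfl⟩ | ⟨rfl, rfl⟩
  exacts [⟨hu, hv⟩, ⟨hv, hu⟩]

theorem Ends.left_mem {e : E} {u v : V} {X : Set V} (h : G.Ends e u v) (he : e ∈ G.inside X) :
    u ∈ X := by
  rcases h with ⟨rfl, rfl⟩ | ⟨rfl, rfl⟩
  exacts [he.1, he.2]

theorem Ends.eq_or {e : E} {u v u' v' : V} (h : G.Ends e u v) (h' : G.Ends e u' v') :
    (u = u' ∧ v = v') ∨ (u = v' ∧ v = u') := by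
  unfold Ends at h h'
  grind

theorem adjVia_symm {P : E → Prop} (u v : V) (h : G.adjVia P u v) : G.adjVia P v u := by
  obtain ⟨e, he, h⟩ := h
  exact ⟨e, he, h.symm⟩

theorem mem_cutEdges {A : Set V} {e : E} :
    e ∈ G.cutEdges A ↔ ∃ u ∈ A, ∃ v, v ∉ A ∧ G.Ends e u v := by
  unfold cutEdges Ends
  grind

theorem reaches_symm {P : E → Prop} {u v : V} (h : G.Reaches P u v) : G.Reaches P v u := by
  induction h with
  | refl => exact .refl
  | tail _ h ih => exact .head (adjVia_symm _ _ h) ih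

theorem exists_step_of_reaches {P : E → Prop} {u v : V} {A : Set V} (h : G.Reaches P u v)
    (hu : u ∈ A) (hv : v ∉ A) : ∃ x ∈ A, ∃ y, y ∉ A ∧ G.adjVia P x y := by
  by_contra! hcon
  induction h with
  | refl => exact hv hu
  | tail _ h ih => exact ih fun hb => hcon _ hb _ hv h

theorem reaches_of_isLinked {P : E → Prop} {Y : Set V} (h : IsLinked (G.adjVia P) Y) {u v : V}
    (hu : u ∈ Y) (hv : v ∈ Y) : G.Reaches P u v :=
  h {w | G.Reaches P u w} ⟨u, hu, .refl⟩ (fun _ _ hx _ _ hxy => hx.tail hxy) hv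

theorem exists_cutEdge_of_connectedVia {P : E → Prop} (h : G.ConnectedVia P) {A : Set V}
    (hA : A.Nonempty) (hA' : Aᶜ.Nonempty) : ∃ e ∈ G.cutEdges A, P e := by
  obtain ⟨u, hu⟩ := hA
  obtain ⟨v, hv⟩ := hA'
  obtain ⟨x, hx, y, hy, e, he, hxy⟩ := exists_step_of_reaches (h.2 u v) hu hv
  exact ⟨e, mem_cutEdges.2 ⟨x, hx, y, hy, hxy⟩, he⟩

theorem connectedVia_of_exists_cutEdge [Nonempty V] {P : E → Prop}
    (h : ∀ A : Set V, A.Nonempty → Aᶜ.Nonempty → ∃ e ∈ G.cutEdges A, P e) : G.ConnectedVia P := by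
  refine ⟨‹_›, fun u v => ?_⟩
  by_contra hv
  obtain ⟨e, he, hP⟩ := h {w | G.Reaches P u w} ⟨u, .refl⟩ ⟨v, hv⟩
  obtain ⟨x, hx, y, hy, hxy⟩ := mem_cutEdges.1 he
  exact hy (Relation.ReflTransGen.tail hx ⟨e, hP, hxy⟩)

theorem EdgeConnected.le_ncard_cutEdges {k : ℕ} (h : G.EdgeConnected k) {A : Set V}
    (hA : A.Nonempty) (hA' : Aᶜ.Nonempty) : k ≤ (G.cutEdges A).ncard := by
  by_contra! hlt
  obtain ⟨e, he, hne⟩ := exists_cutEdge_of_connectedVia (h _ hlt) hA hA'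
  exact hne he

theorem Cubic.not_four_edges [Finite E] (hG : G.Cubic) {w a b c d : V} {e f g h : E}
    (he : G.Ends e w a) (hf : G.Ends f w b) (hg : G.Ends g w c) (hh : G.Ends h w d)
    (hef : e ≠ f) (heg : e ≠ g) (heh : e ≠ h) (hfg : f ≠ g) (hfh : f ≠ h) (hgh : g ≠ h) :
    False := by
  have hsub : (({e, f, g, h} : Finset E) : Set E) ⊆ {e | G.src e = w} ∪ {e | G.tgt e = w} := by
    have hend : ∀ {e : E} {a : V}, G.Ends e w a →
        e ∈ ({e | G.src e = w} ∪ {e | G.tgt e = w} : Set E) := by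
      rintro e a (h | h)
      exacts [.inl h.1, .inr h.2]
    intro x hx
    simp only [Finset.coe_insert, Finset.coe_singleton, Set.mem_insert_iff,
      Set.mem_singleton_iff] at hx
    rcases hx with rfl | rfl | rfl | rfl
    exacts [hend he, hend hf, hend hg, hend hh]
  have h1 := Set.ncard_le_ncard hsub (Set.toFinite _)
  rw [Set.ncard_coe_finset] at h1
  have h2 := Set.ncard_union_le {e | G.src e = w} {e | G.tgt e = w}
  have h3 : ({e, f, g, h} : Finset E).card = 4 := by
    simp [*]
  have h4 := hG w
  unfold degree at h4
  omega

/-- An edge outside `C` at a vertex of degree two in `C` is unique in a cubic graph. -/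
theorem Cubic.eq_of_notMem [Finite E] (hG : G.Cubic) {C : Set E} {w a b : V} {e f : E}
    (hw : {e ∈ C | G.src e = w}.ncard + {e ∈ C | G.tgt e = w}.ncard = 2)
    (he : G.Ends e w a) (hf : G.Ends f w b) (heC : e ∉ C) (hfC : f ∉ C) : e = f := by
  by_contra hef
  have key : ∀ g : E → V, {e ∈ C | g e = w}.ncard + {e | e ∉ C ∧ g e = w}.ncard
      = {e | g e = w}.ncard := by
    intro g
    rw [← Set.ncard_union_eq]
    · congr 1
      ext x
      simp only [Set.mem_union, Set.mem_ofPred_eq]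
      tauto
    · rw [Set.disjoint_left]
      exact fun x hx hx' => hx'.1 hx.1
  have h1 := key G.src
  have h2 := key G.tgt
  have h3 := hG w
  unfold degree at h3
  have hsub : ({e, f} : Set E) ⊆ {e | e ∉ C ∧ G.src e = w} ∪ {e | e ∉ C ∧ G.tgt e = w} := by
    rintro x (rfl | rfl)
    · rcases he with h | h
      exacts [.inl ⟨heC, h.1⟩, .inr ⟨heC, h.2⟩]
    · rcases hf with h | h
      exacts [.inl ⟨hfC, h.1⟩, .inr ⟨hfC, h.2⟩]
  have h4 := Set.ncard_le_ncard hsub (Set.toFinite _)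
  rw [Set.ncard_pair hef] at h4
  have h5 := Set.ncard_union_le {e | e ∉ C ∧ G.src e = w} {e | e ∉ C ∧ G.tgt e = w}
  omega

section Cycles

variable [Fintype E]

/-- The boundary of an edge set, given by its indicator function modulo two. -/
noncomputable def boundary (G : Multigraph V E) (f : E → ZMod 2) (v : V) : ZMod 2 :=
  ∑ e, f e * ((if G.src e = v then 1 else 0) + if G.tgt e = v then 1 else 0)

theorem boundary_add_single (f : E → ZMod 2) (e : E) (v : V) :
    G.boundary (f + Pi.single e 1) v = G.boundary f v +
      ((if G.src e = v then 1 else 0) + if G.tgt e = v then 1 else 0) := by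
  simp only [boundary, Pi.add_apply, add_mul, Finset.sum_add_distrib]
  congr 1
  rw [Finset.sum_eq_single e]
  · simp
  · intro b _ hb
    simp [Pi.single_eq_of_ne hb]
  · simp

theorem exists_boundary_of_reaches {P : E → Prop} {u v : V} (h : G.Reaches P u v) :
    ∃ f : E → ZMod 2, (∀ e, f e ≠ 0 → P e) ∧
      ∀ w, G.boundary f w = (if u = w then 1 else 0) + if v = w then 1 else 0 := by
  induction h with
  | refl =>
    refine ⟨0, by simp, fun w => ?_⟩
    rw [CharTwo.add_self_eq_zero]
    simp [boundary]
  | @tail b c _ hbc ih =>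
    obtain ⟨f, hf, hbd⟩ := ih
    obtain ⟨e, he, hends⟩ := hbc
    refine ⟨f + Pi.single e 1, fun x hx => ?_, fun w => ?_⟩
    · by_cases hxe : x = e
      · exact hxe ▸ he
      · exact hf x (by simpa [Pi.single_eq_of_ne hxe] using hx)
    · rw [boundary_add_single, hbd]
      have hsum : ((if G.src e = w then 1 else 0) + if G.tgt e = w then 1 else 0 : ZMod 2) =
          (if b = w then 1 else 0) + if c = w then 1 else 0 := by
        rcases hends with ⟨rfl, rfl⟩ | ⟨rfl, rfl⟩
        · rfl
        · rw [add_comm]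
      rw [hsum, add_assoc, ← add_assoc (if b = w then 1 else 0 : ZMod 2),
        CharTwo.add_self_eq_zero, zero_add]

theorem boundary_eq_ncard (f : E → ZMod 2) (v : V) :
    G.boundary f v = (({e ∈ {e | f e ≠ 0} | G.src e = v}.ncard +
      {e ∈ {e | f e ≠ 0} | G.tgt e = v}.ncard : ℕ) : ZMod 2) := by
  have key : ∀ g : E → V, ∑ e, f e * (if g e = v then 1 else 0) =
      (({e ∈ {e | f e ≠ 0} | g e = v}.ncard : ℕ) : ZMod 2) := by
    intro g
    rw [Set.ncard_eq_toFinset_card', Finset.cast_card, ← Finset.sum_filter_add_sum_filter_not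
      Finset.univ (· ∈ ({e ∈ {e | f e ≠ 0} | g e = v} : Set E).toFinset)]
    rw [Finset.sum_eq_zero (s := Finset.univ.filter (· ∉ _)), add_zero]
    · refine Finset.sum_congr (by ext; simp) fun e he => ?_
      simp only [Set.mem_toFinset, Set.mem_ofPred_eq] at he
      have h1 : ∀ x : ZMod 2, x ≠ 0 → x = 1 := by decide
      rw [h1 _ he.1, if_pos he.2, one_mul]
    · intro e he
      simp only [Finset.mem_filter, Finset.mem_univ, true_and, Set.mem_toFinset,
        Set.mem_ofPred_eq, not_and, ne_eq] at he
      by_cases h : f e = 0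
      · simp [h]
      · simp [he h]
  simp only [boundary, mul_add, Finset.sum_add_distrib, key, Nat.cast_add]

/-- In a cubic graph, every edge of an even edge set lies on a cycle within that set. -/
theorem Cubic.exists_isCycle_of_boundary (hG : G.Cubic) {f : E → ZMod 2}
    (hf : ∀ v, G.boundary f v = 0) {e : E} (he : f e ≠ 0) :
    ∃ C, G.IsCycle C ∧ e ∈ C ∧ ∀ x ∈ C, f x ≠ 0 := by
  set F : Set E := {x | f x ≠ 0} with hF
  set K : Set V := {v | G.Reaches (· ∈ F) (G.src e) v} with hK
  have hsrc : ∀ x ∈ F, G.src x ∈ K → G.tgt x ∈ K := fun x hx h =>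
    Relation.ReflTransGen.tail h ⟨x, hx, .inl ⟨rfl, rfl⟩⟩
  have htgt : ∀ x ∈ F, G.tgt x ∈ K → G.src x ∈ K := fun x hx h =>
    Relation.ReflTransGen.tail h ⟨x, hx, .inr ⟨rfl, rfl⟩⟩
  have htouch : ∀ v, G.touches {x ∈ F | G.src x ∈ K} v → v ∈ K := by
    rintro v ⟨x, hx, rfl | rfl⟩
    exacts [hx.2, hsrc x hx.1 hx.2]
  have hreach : ∀ v ∈ K, G.Reaches (· ∈ {x ∈ F | G.src x ∈ K}) (G.src e) v := by
    intro v hv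
    change G.Reaches _ _ _ at hv
    induction hv with
    | refl => exact .refl
    | @tail b c hb hbc ih =>
      obtain ⟨x, hx, hends⟩ := hbc
      refine ih.tail ⟨x, ⟨hx, ?_⟩, hends⟩
      rcases hends with ⟨rfl, rfl⟩ | ⟨rfl, rfl⟩
      exacts [hb, htgt x hx hb]
  refine ⟨{x ∈ F | G.src x ∈ K}, ⟨⟨e, he, .refl⟩, fun v hv => ?_, fun u v hu hv => ?_⟩,
    ⟨he, .refl⟩, fun x hx => hx.1⟩
  · have hvK := htouch v hv
    have h1 : {x ∈ {x ∈ F | G.src x ∈ K} | G.src x = v} = {x ∈ F | G.src x = v} := by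
      ext x
      simp only [Set.mem_ofPred_eq]
      exact ⟨fun h => ⟨h.1.1, h.2⟩, fun h => ⟨⟨h.1, h.2 ▸ hvK⟩, h.2⟩⟩
    have h2 : {x ∈ {x ∈ F | G.src x ∈ K} | G.tgt x = v} = {x ∈ F | G.tgt x = v} := by
      ext x
      simp only [Set.mem_ofPred_eq]
      exact ⟨fun h => ⟨h.1.1, h.2⟩, fun h => ⟨⟨h.1, htgt x h.1 (h.2 ▸ hvK)⟩, h.2⟩⟩
    rw [h1, h2]
    have heven := hf v
    rw [boundary_eq_ncard, ← hF, ZMod.natCast_eq_zero_iff_even] at heven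
    have hle1 : {x ∈ F | G.src x = v}.ncard ≤ {x | G.src x = v}.ncard :=
      Set.ncard_le_ncard (fun x hx => hx.2) (Set.toFinite _)
    have hle2 : {x ∈ F | G.tgt x = v}.ncard ≤ {x | G.tgt x = v}.ncard :=
      Set.ncard_le_ncard (fun x hx => hx.2) (Set.toFinite _)
    have hdeg := hG v
    unfold degree at hdeg
    have hpos : 0 < {x ∈ F | G.src x = v}.ncard ∨ 0 < {x ∈ F | G.tgt x = v}.ncard := by
      obtain ⟨x, hx, hxv | hxv⟩ := hv
      · exact .inl ((Set.ncard_pos (Set.toFinite _)).2 ⟨x, hx.1, hxv⟩)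
      · exact .inr ((Set.ncard_pos (Set.toFinite _)).2 ⟨x, hx.1, hxv⟩)
    obtain ⟨k, hk⟩ := heven
    omega
  · exact (reaches_symm (hreach u (htouch u hu))).trans (hreach v (htouch v hv))

/-- A `2`-closed set contains each edge whose ends are joined by other edges, all but at most one
of which lie in the set. -/
theorem Cubic.mem_of_closed (hG : G.Cubic) {R : Set E} (hR : G.Closed 2 R) {e e' : E}
    (h : G.Reaches (fun x => x ≠ e ∧ (x ∈ R ∨ x = e')) (G.src e) (G.tgt e)) : e ∈ R := by
  by_contra heR
  obtain ⟨f, hf, hbd⟩ := exists_boundary_of_reaches h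
  have hfe : f e = 0 := by
    by_contra hne
    exact (hf e hne).1 rfl
  obtain ⟨C, hC, heC, hCf⟩ := hG.exists_isCycle_of_boundary (f := f + Pi.single e 1) (e := e)
    (fun v => by rw [boundary_add_single, hbd, CharTwo.add_self_eq_zero]) (by simp [hfe])
  have hsub : C \ R ⊆ {e, e'} := by
    rintro x ⟨hxC, hxR⟩
    by_cases hxe : x = e
    · exact .inl hxe
    · have hx := hCf x hxC
      rw [Pi.add_apply, Pi.single_eq_of_ne hxe, add_zero] at hx
      exact .inr ((hf x hx).2.resolve_left hxR)
  have h1 := hR C hC ⟨e, heC, heR⟩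
  have h2 := Set.ncard_le_ncard hsub (Set.toFinite _)
  have h3 := Set.ncard_insert_le e {e'}
  rw [Set.ncard_singleton] at h3
  omega

theorem Cubic.mem_of_ends (hG : G.Cubic) {R : Set E} (hR : G.Closed 2 R) {e e' : E} {u v : V}
    (he : G.Ends e u v) (h : G.Reaches (fun x => x ≠ e ∧ (x ∈ R ∨ x = e')) u v) : e ∈ R := by
  rcases he with ⟨rfl, rfl⟩ | ⟨rfl, rfl⟩
  exacts [hG.mem_of_closed hR h, hG.mem_of_closed hR (reaches_symm h)]

/-- If two disjoint vertex sets are connected within a `2`-closed set and are joined by two edges,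
then their union is connected within the `2`-closed set. -/
theorem Cubic.isLinked_union_of_closed (hG : G.Cubic) {R : Set E} (hR : G.Closed 2 R)
    {X M : Set V} (hX : IsLinked (G.adjVia (· ∈ R)) X) (hM : IsLinked (G.adjVia (· ∈ R)) M)
    {e e' : E} {x x' m m' : V} (hx : x ∈ X) (hx' : x' ∈ X) (hm : m ∈ M) (hm' : m' ∈ M)
    (he : G.Ends e x m) (he' : G.Ends e' x' m') (hne : e ≠ e') :
    IsLinked (G.adjVia (· ∈ R)) (X ∪ M) := by
  have heR : e ∈ R := by
    by_contra heR
    have hmono : ∀ u v, G.adjVia (· ∈ R) u v →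
        G.adjVia (fun y => y ≠ e ∧ (y ∈ R ∨ y = e')) u v := by
      rintro u v ⟨y, hy, huv⟩
      exact ⟨y, ⟨fun h => heR (h ▸ hy), .inl hy⟩, huv⟩
    have hlink := (hX.mono fun u _ v _ => hmono u v).union adjVia_symm
      (hM.mono fun u _ v _ => hmono u v) hx' hm' ⟨e', ⟨hne.symm, .inr rfl⟩, he'⟩
    exact heR (hG.mem_of_ends hR he (reaches_of_isLinked hlink (.inl hx) (.inr hm)))
  exact hX.union adjVia_symm hM hx hm ⟨e, heR, he⟩

end Cycles

/-- Two vertices joined by an edge. -/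
abbrev Adj (G : Multigraph V E) : V → V → Prop := G.adjVia fun _ => True

theorem Ends.adj {e : E} {u v : V} (h : G.Ends e u v) : G.Adj u v := ⟨e, trivial, h⟩

theorem Adj.exists_ends {u v : V} (h : G.Adj u v) : ∃ e, G.Ends e u v := by
  obtain ⟨e, -, he⟩ := h
  exact ⟨e, he⟩

/-- Let the complement of `X` be connected and let every vertex outside `X` send at most one edge
to `X`. Then there is a connected set `M` outside `X`, sending at least two edges to `X`, such that
the rest of the complement is connected and every vertex of `M` has a neighbour in it. -/
theorem Cubic.exists_linked_part [Finite V] [Finite E] (hG : G.Cubic) (h3 : G.EdgeConnected 3)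
    {X : Set V} (hX : X.Nonempty) (hH : Xᶜ.Nonempty) (hl : IsLinked G.Adj Xᶜ)
    (hone : ∀ v ∉ X, ∀ x ∈ X, ∀ x' ∈ X, ∀ e e', G.Ends e v x → G.Ends e' v x' → e = e') :
    ∃ M ⊆ Xᶜ, IsLinked G.Adj M ∧ IsLinked G.Adj (Xᶜ \ M) ∧
      (∃ a ∈ M, ∃ b ∈ M, a ≠ b ∧ (∃ x ∈ X, G.Adj a x) ∧ ∃ x ∈ X, G.Adj b x) ∧
      ∀ v ∈ M, ∃ u ∈ Xᶜ \ M, G.Adj v u := by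
  set D : Set V := {v | ∃ x ∈ X, G.Adj v x} with hD
  -- Removing any vertex from the complement leaves two vertices adjacent to `X`.
  have hpair : ∀ v, ∃ a ∈ Xᶜ \ {v}, ∃ b ∈ Xᶜ \ {v}, a ≠ b ∧ a ∈ D ∧ b ∈ D := by
    intro v
    have hcut := h3.le_ncard_cutEdges hX hH
    obtain ⟨e₁, he₁, e₂, he₂, e₃, he₃, h12, h13, h23⟩ := (Set.two_lt_ncard).1 hcut
    obtain ⟨x₁, hx₁, v₁, hv₁, hend₁⟩ := mem_cutEdges.1 he₁
    obtain ⟨x₂, hx₂, v₂, hv₂, hend₂⟩ := mem_cutEdges.1 he₂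
    obtain ⟨x₃, hx₃, v₃, hv₃, hend₃⟩ := mem_cutEdges.1 he₃
    have hD₁ : v₁ ∈ D := ⟨x₁, hx₁, hend₁.symm.adj⟩
    have hD₂ : v₂ ∈ D := ⟨x₂, hx₂, hend₂.symm.adj⟩
    have hD₃ : v₃ ∈ D := ⟨x₃, hx₃, hend₃.symm.adj⟩
    have hv12 : v₁ ≠ v₂ := by
      rintro rfl
      exact h12 (hone _ hv₁ _ hx₁ _ hx₂ _ _ hend₁.symm hend₂.symm)
    have hv13 : v₁ ≠ v₃ := by
      rintro rfl
      exact h13 (hone _ hv₁ _ hx₁ _ hx₃ _ _ hend₁.symm hend₃.symm)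
    have hv23 : v₂ ≠ v₃ := by
      rintro rfl
      exact h23 (hone _ hv₂ _ hx₂ _ hx₃ _ _ hend₂.symm hend₃.symm)
    by_cases h1 : v₁ = v
    · exact ⟨v₂, ⟨hv₂, fun h => hv12 (h1.trans h.symm)⟩, v₃,
        ⟨hv₃, fun h => hv13 (h1.trans h.symm)⟩, hv23, hD₂, hD₃⟩
    by_cases h2 : v₂ = v
    · exact ⟨v₁, ⟨hv₁, h1⟩, v₃, ⟨hv₃, fun h => hv23 (h2.trans h.symm)⟩, hv13, hD₁, hD₃⟩
    · exact ⟨v₁, ⟨hv₁, h1⟩, v₂, ⟨hv₂, h2⟩, hv12, hD₁, hD₂⟩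
  obtain ⟨v, hvX, hv⟩ : ∃ v ∈ Xᶜ, IsLinked G.Adj (Xᶜ \ {v}) := by
    obtain ⟨a, ha, b, hb, hab, -⟩ := hpair hX.some
    exact hl.exists_linked_diff_singleton adjVia_symm ha.1 hb.1 hab
  obtain ⟨M, -, hM⟩ := (Set.toFinite {M : Set V | M ⊆ Xᶜ ∧ IsLinked G.Adj M ∧
      IsLinked G.Adj (Xᶜ \ M) ∧ (Xᶜ \ M).Nonempty ∧
      ∃ a ∈ M, ∃ b ∈ M, a ≠ b ∧ a ∈ D ∧ b ∈ D}).exists_le_minimal (a := Xᶜ \ {v})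
    ⟨Set.sdiff_subset, hv, by
      rw [Set.sdiff_sdiff_right_self, Set.inter_eq_right.2 (by simpa using hvX)]
      exact isLinked_singleton v, ⟨v, hvX, by simp⟩, hpair v⟩
  obtain ⟨hMX, hMl, hRl, hRne, hMD⟩ := hM.prop
  set R : Set V := Xᶜ \ M with hR
  -- By minimality, removing a vertex adjacent to `R` separates the vertices of `D` in `M`.
  have hsep : ∀ w ∈ M, (∃ u ∈ R, G.Adj w u) → ∀ Q ⊆ M \ {w}, IsLinked G.Adj Q →
      ∀ a ∈ Q, ∀ b ∈ Q, a ∈ D → b ∈ D → a = b := by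
    rintro w hw ⟨u, hu, hwu⟩ Q hQ hQl a ha b hb haD hbD
    by_contra hab
    obtain ⟨T, hQT, hTM, hTl, hTcl⟩ := hQl.exists_component adjVia_symm hQ
    have hZ : IsLinked G.Adj (R ∪ {w}) :=
      hRl.union adjVia_symm (isLinked_singleton w) hu rfl (adjVia_symm _ _ hwu)
    have hwT : w ∉ T := fun h => (hTM h).2 rfl
    have hTl' : IsLinked G.Adj (Xᶜ \ T) := by
      refine hl.sdiff adjVia_symm hZ (Set.union_subset Set.sdiff_subset (by simpa using hMX hw))
        ⟨w, .inr rfl⟩ ?_ ?_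
      · rw [Set.disjoint_left]
        rintro y hyT (hyR | rfl)
        exacts [hyR.2 (hTM hyT).1, hwT hyT]
      · intro y hy z hz hzZ hyz
        refine hTcl y hy z ⟨?_, fun h => hzZ (.inr h)⟩ hyz
        by_contra hzM
        exact hzZ (.inl ⟨hz, hzM⟩)
    have hle := hM.le_of_le (y := T) ⟨fun y hy => hMX (hTM hy).1, hTl, hTl',
      ⟨w, hMX hw, hwT⟩, a, hQT ha, b, hQT hb, hab, haD, hbD⟩ (fun y hy => (hTM hy).1)
    exact hwT (hle hw)
  refine ⟨M, hMX, hMl, hRl, hMD, ?_⟩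
  by_contra! hcon
  obtain ⟨v₀, hv₀M, hv₀⟩ := hcon
  obtain ⟨S, hv₀S, hSN, hSl, hScl⟩ := (isLinked_singleton (r := G.Adj) v₀).exists_component
    adjVia_symm (Y := {v ∈ M | ∀ u ∈ R, ¬ G.Adj v u}) (by simpa using ⟨hv₀M, hv₀⟩)
  have hSM : S ⊆ M := fun s hs => (hSN hs).1
  have hSne : S.Nonempty := ⟨v₀, hv₀S rfl⟩
  obtain ⟨w₀, hw₀M, hw₀⟩ : ∃ w ∈ M, ∃ u ∈ R, G.Adj w u := by
    obtain ⟨u, hu⟩ := hRne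
    obtain ⟨y, -, hyM, z, hz, hzM, hyz⟩ := hl.exists_step (hMX hv₀M) hv₀M hu.1 hu.2
    exact ⟨y, hyM, z, ⟨hz, hzM⟩, hyz⟩
  have hSD : ∀ a ∈ S, ∀ b ∈ S, a ∈ D → b ∈ D → a = b := by
    refine hsep w₀ hw₀M hw₀ S (fun s hs => ⟨hSM hs, ?_⟩) hSl
    rintro rfl
    obtain ⟨u, hu, hwu⟩ := hw₀
    exact (hSN hs).2 u hu hwu
  obtain ⟨a, haM, b, hbM, hab, haD, hbD, haS⟩ : ∃ a ∈ M, ∃ b ∈ M, a ≠ b ∧ a ∈ D ∧ b ∈ D ∧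
      ∀ c ∈ S, c ∈ D → c = a := by
    obtain ⟨a, haM, b, hbM, hab, haD, hbD⟩ := hMD
    by_cases hc : ∃ c ∈ S, c ∈ D
    · obtain ⟨c, hcS, hcD⟩ := hc
      have hc' : ∀ d ∈ S, d ∈ D → d = c := fun d hd hdD => hSD d hd c hcS hdD hcD
      by_cases hac : c = a
      · exact ⟨a, haM, b, hbM, hab, haD, hbD, hac ▸ hc'⟩
      · exact ⟨c, hSM hcS, a, haM, hac, hcD, haD, hc'⟩
    · push Not at hc
      exact ⟨a, haM, b, hbM, hab, haD, hbD, fun c hcS hcD => absurd hcD (hc c hcS)⟩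
  -- An edge leaving `S` points towards `x` if it joins `x` to `X` or leads to the component
  -- of `M \ S` containing `x`.
  let p : V → Set E := fun x => {e | (x ∈ S ∧ ∃ y ∈ X, G.Ends e x y) ∨
    ∃ s ∈ S, ∃ w ∈ M \ S, G.Ends e s w ∧ (∃ u ∈ R, G.Adj w u) ∧ ∃ T ⊆ M \ S, w ∈ T ∧ x ∈ T ∧
      IsLinked G.Adj T ∧ ∀ u ∈ T, ∀ v ∈ M \ S, G.Adj u v → v ∈ T}
  have hrest : ∀ T ⊆ M \ S, (∀ u ∈ T, ∀ v ∈ M \ S, G.Adj u v → v ∈ T) →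
      IsLinked G.Adj (M \ T) := fun T hT hTcl =>
    hMl.sdiff adjVia_symm hSl hSM hSne (Set.disjoint_left.2 fun y hy => (hT hy).2)
      fun y hy z hz hzS hyz => hTcl y hy z ⟨hz, hzS⟩ hyz
  have hcover : G.cutEdges S ⊆ p a ∪ p b := by
    intro e he
    obtain ⟨s, hs, w, hw, hsw⟩ := mem_cutEdges.1 he
    by_cases hwX : w ∈ X
    · obtain rfl := haS s hs ⟨w, hwX, hsw.adj⟩
      exact .inl (.inl ⟨hs, w, hwX, hsw⟩)
    have hwM : w ∈ M := by
      by_contra hwM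
      exact (hSN hs).2 w ⟨hwX, hwM⟩ hsw.adj
    have hwR : ∃ u ∈ R, G.Adj w u := by
      by_contra! hwR
      exact hw (hScl s hs w ⟨hwM, hwR⟩ hsw.adj)
    obtain ⟨T, hwT, hTM, hTl, hTcl⟩ := (isLinked_singleton (r := G.Adj) w).exists_component
      adjVia_symm (Y := M \ S) (by simpa using ⟨hwM, hw⟩)
    by_cases haT : a ∈ T
    · exact .inl (.inr ⟨s, hs, w, ⟨hwM, hw⟩, hsw, hwR, T, hTM, hwT rfl, haT, hTl, hTcl⟩)
    by_cases hbT : b ∈ T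
    · exact .inr (.inr ⟨s, hs, w, ⟨hwM, hw⟩, hsw, hwR, T, hTM, hwT rfl, hbT, hTl, hTcl⟩)
    · refine absurd (hsep w hwM hwR (M \ T) (fun y hy => ⟨hy.1, ?_⟩) (hrest T hTM hTcl)
        a ⟨haM, haT⟩ b ⟨hbM, hbT⟩ haD hbD) hab
      rintro rfl
      exact hy.2 (hwT rfl)
  have hunique : ∀ x, (p x).ncard ≤ 1 := by
    intro x
    rw [Set.ncard_le_one (Set.toFinite _)]
    rintro e he e' he'
    rcases he with ⟨hxS, y, hy, hxy⟩ |
      ⟨s, hs, w, hw, hsw, ⟨z, hz, hadj⟩, T, hTM, hwT, hxT, hTl, hTcl⟩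
    · rcases he' with ⟨-, y', hy', hxy'⟩ | ⟨-, -, -, -, -, -, T, hTM, -, hxT, -⟩
      · exact hone x (hMX (hSM hxS)) y hy y' hy' e e' hxy hxy'
      · exact absurd hxS (hTM hxT).2
    rcases he' with ⟨hxS, -⟩ | ⟨s', hs', w', hw', hsw', -, T', hTM', hwT', hxT', hTl', -⟩
    · exact absurd hxS (hTM hxT).2
    obtain ⟨f, hwz⟩ := hadj.exists_ends
    have hw'T : w' ∈ T := hTl'.subset_of_closed hTM' hTcl hxT' hxT hwT'
    by_contra hee
    have hfe : f ≠ e := by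
      rintro rfl
      rcases hwz.eq_or hsw with h | h
      · exact hw.2 (h.1 ▸ hs)
      · exact hz.2 (h.2 ▸ hSM hs)
    have hfe' : f ≠ e' := by
      rintro rfl
      rcases hwz.eq_or hsw' with h | h
      · exact hw.2 (h.1 ▸ hs')
      · exact hz.2 (h.2 ▸ hSM hs')
    have hother : ∀ g y, G.Ends g w y → y ∉ R → y ∉ S → g ≠ e ∧ g ≠ f := by
      intro g y hg hyR hyS
      constructor
      · rintro rfl
        rcases hg.eq_or hsw with h | h
        · exact hw.2 (h.1 ▸ hs)
        · exact hyS (h.2 ▸ hs)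
      · rintro rfl
        rcases hg.eq_or hwz with h | h
        · exact hyR (h.2 ▸ hz)
        · exact hz.2 (h.1 ▸ hw.1)
    have hTRS : ∀ y ∈ T, y ∉ R ∧ y ∉ S := fun y hy => ⟨fun h => h.2 (hTM hy).1, (hTM hy).2⟩
    -- At most one edge joins `w` to a vertex outside `R` and `S`.
    have hthird : ∀ g g' y y', G.Ends g w y → G.Ends g' w y' → y ∉ R ∧ y ∉ S → y' ∉ R ∧ y' ∉ S →
        g = g' := by
      intro g g' y y' hg hg' hy hy'
      by_contra hgg
      obtain ⟨h1, h2⟩ := hother g y hg hy.1 hy.2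
      obtain ⟨h3, h4⟩ := hother g' y' hg' hy'.1 hy'.2
      exact hG.not_four_edges hg hg' hsw.symm hwz hgg h1 h2 h3 h4 hfe.symm
    by_cases hww : w' = w
    · subst hww
      have hnone : ∀ g y, G.Ends g w' y → y ∉ R → y ∉ S → False := by
        intro g y hg hyR hyS
        obtain ⟨h1, h2⟩ := hother g y hg hyR hyS
        have h3 : g ≠ e' := by
          rintro rfl
          rcases hg.eq_or hsw' with h | h
          · exact hw.2 (h.1 ▸ hs')
          · exact hyS (h.2 ▸ hs')
        exact hG.not_four_edges hg hsw.symm hsw'.symm hwz h1 h3 h2 hee hfe.symm hfe'.symm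
      have hTw : T ⊆ {w'} := hTl {w'} ⟨w', hwT, rfl⟩ (by
        rintro u hu rfl v hv huv
        obtain ⟨g, hg⟩ := huv.exists_ends
        exact (hnone g v hg (hTRS v hv).1 (hTRS v hv).2).elim)
      have hwD : w' ∉ D := by
        rintro ⟨y, hy, hwy⟩
        obtain ⟨g, hg⟩ := hwy.exists_ends
        exact hnone g y hg (fun h => h.1 hy) (fun h => hMX (hSM h) hy)
      refine hab (hsep w' hw.1 ⟨z, hz, hwz.adj⟩ (M \ T) (fun y hy => ⟨hy.1, ?_⟩)
        (hrest T hTM hTcl) a ⟨haM, ?_⟩ b ⟨hbM, ?_⟩ haD hbD)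
      · rintro rfl
        exact hy.2 hwT
      · exact fun h => hwD (hTw h ▸ haD)
      · exact fun h => hwD (hTw h ▸ hbD)
    · obtain ⟨t, ht, htw, g, hg⟩ : ∃ t ∈ T, t ≠ w ∧ ∃ g, G.Ends g w t := by
        obtain ⟨u, -, rfl, v, hv, hvu, huv⟩ := hTl.exists_step (A := {w}) hwT rfl hw'T hww
        exact ⟨v, hv, hvu, huv.exists_ends⟩
      have hwD : w ∉ D := by
        rintro ⟨y, hy, hwy⟩
        obtain ⟨g', hg'⟩ := hwy.exists_ends
        obtain rfl := hthird g g' t y hg hg' (hTRS t ht) ⟨fun h => h.1 hy, fun h => hMX (hSM h) hy⟩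
        rcases hg.eq_or hg' with h | h
        · exact hMX (hTM ht).1 (h.2 ▸ hy)
        · exact hMX hw.1 (h.1 ▸ hy)
      have hT1 : IsLinked G.Adj (T \ {w}) := by
        refine hTl.sdiff adjVia_symm (isLinked_singleton t) (by simpa using ht) ⟨t, rfl⟩
          (by simpa using htw.symm) ?_
        rintro u rfl y hy hyt huy
        obtain ⟨g', hg'⟩ := huy.exists_ends
        obtain rfl := hthird g g' t y hg hg' (hTRS t ht) (hTRS y hy)
        rcases hg.eq_or hg' with h | h
        exacts [absurd h.2.symm hyt, absurd h.2 htw]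
      have hlink : IsLinked G.Adj (M \ T ∪ T \ {w}) :=
        (hrest T hTM hTcl).union adjVia_symm hT1 ⟨hSM hs', fun h => (hTM h).2 hs'⟩
          ⟨hw'T, hww⟩ hsw'.adj
      refine hab (hsep w hw.1 ⟨z, hz, hwz.adj⟩ _ ?_ hlink a ?_ b ?_ haD hbD)
      · rintro y (hy | hy)
        · refine ⟨hy.1, ?_⟩
          rintro rfl
          exact hy.2 hwT
        · exact ⟨(hTM hy.1).1, hy.2⟩
      · by_cases haT : a ∈ T
        · exact .inr ⟨haT, fun h => hwD (h ▸ haD)⟩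
        · exact .inl ⟨haM, haT⟩
      · by_cases hbT : b ∈ T
        · exact .inr ⟨hbT, fun h => hwD (h ▸ hbD)⟩
        · exact .inl ⟨hbM, hbT⟩
  have h1 := h3.le_ncard_cutEdges hSne (hX.mono fun y hy hyS => hMX (hSM hyS) hy)
  have h2 := Set.ncard_le_ncard hcover (Set.toFinite _)
  have h4 := Set.ncard_union_le (p a) (p b)
  have h5 := hunique a
  have h6 := hunique b
  omega

/-- The vertices of a peripheral cycle leave a connected graph in a cubic graph. -/
theorem Cubic.isLinked_compl_cycle [Finite E] (hG : G.Cubic) {C : Set E} (hC : G.IsCycle C)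
    (hper : G.Peripheral C) : IsLinked G.Adj {v | G.touches C v}ᶜ := by
  set X : Set V := {v | G.touches C v} with hX
  rintro A ⟨x, hxX, hxA⟩ hcl y hyX
  by_contra hyA
  obtain ⟨e, he, heC⟩ := exists_cutEdge_of_connectedVia hper
    (A := {v | (v ∉ X ∧ v ∈ A) ∨ (v ∈ X ∧ ∃ a ∉ X, a ∈ A ∧ ∃ f ∉ C, G.Ends f v a)})
    ⟨x, .inl ⟨hxX, hxA⟩⟩ ⟨y, by
      rintro (h | h)
      exacts [hyA h.2, hyX h.1]⟩
  obtain ⟨u, hu, v, hv, huv⟩ := mem_cutEdges.1 he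
  rcases hu with ⟨huX, huA⟩ | ⟨huX, a, haX, haA, f, hfC, hua⟩
  · by_cases hvX : v ∈ X
    · exact hv (.inr ⟨hvX, u, huX, huA, e, heC, huv.symm⟩)
    · exact hv (.inl ⟨hvX, hcl u huX huA v hvX huv.adj⟩)
  · obtain rfl := hG.eq_of_notMem (hC.2.1 u huX) huv hua heC hfC
    rcases huv.eq_or hua with h | h
    · exact hv (.inl (h.2 ▸ ⟨haX, haA⟩))
    · exact haX (h.1 ▸ huX)

theorem IsCycle.isLinked {C : Set E} (hC : G.IsCycle C) :
    IsLinked (G.adjVia (· ∈ C)) {v | G.touches C v} := by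
  rintro A ⟨x, hx, hxA⟩ hcl y hy
  by_contra hyA
  obtain ⟨u, hu, v, hv, e, he, huv⟩ := exists_step_of_reaches (hC.2.2 x y hx hy) hxA hyA
  refine hv (hcl u ?_ hu v ?_ ⟨e, he, huv⟩)
  · rcases huv with h | h
    exacts [⟨e, he, .inl h.1⟩, ⟨e, he, .inr h.2⟩]
  · rcases huv with h | h
    exacts [⟨e, he, .inr h.2⟩, ⟨e, he, .inl h.1⟩]

/-- Enlarging a peripheral set `B` inside `X` by the edges inside a set `M` outside `X` keeps it
peripheral if the remaining vertices are connected and every vertex of `M` has a neighbour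
among them. -/
theorem exists_cutEdge_notMem_union {B : Set E} {X M : Set V} (hBX : B ⊆ G.inside X)
    (hB : ∀ A : Set V, A.Nonempty → Aᶜ.Nonempty → ∃ e ∈ G.cutEdges A, e ∉ B)
    (hl : IsLinked G.Adj (Xᶜ \ M)) (hM : ∀ v ∈ M, ∃ u ∈ Xᶜ \ M, G.Adj v u)
    {A : Set V} (hA : A.Nonempty) (hA' : Aᶜ.Nonempty) :
    ∃ e ∈ G.cutEdges A, e ∉ B ∪ G.inside M := by
  by_contra! hcon
  -- an edge with an endpoint in `Xᶜ \ M` does not cross `A`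
  have hside : ∀ u ∈ Xᶜ \ M, ∀ v, G.Adj u v → (u ∈ A ↔ v ∈ A) := by
    intro u hu v huv
    obtain ⟨e, he⟩ := huv.exists_ends
    have heB : e ∉ B ∪ G.inside M := by
      rintro (h | h)
      exacts [hu.1 (he.left_mem (hBX h)), hu.2 (he.left_mem h)]
    constructor
    · intro huA
      by_contra hvA
      exact heB (hcon e (mem_cutEdges.2 ⟨u, huA, v, hvA, he⟩))
    · intro hvA
      by_contra huA
      exact heB (hcon e (mem_cutEdges.2 ⟨v, hvA, u, huA, he.symm⟩))
  obtain ⟨e, he, heB⟩ := hB A hA hA'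
  obtain ⟨u, hu, v, hv, huv⟩ := mem_cutEdges.1 he
  have heM : e ∈ G.inside M := (hcon e he).resolve_left heB
  obtain ⟨u', hu', huu'⟩ := hM u (huv.left_mem heM)
  obtain ⟨v', hv', hvv'⟩ := hM v (huv.symm.left_mem heM)
  have hu'A : u' ∈ A := (hside u' hu' u (adjVia_symm _ _ huu')).2 hu
  have hsub := hl A ⟨u', hu', hu'A⟩ fun x hx hxA y _ hxy => (hside x hx y hxy).1 hxA
  exact hv ((hside v' hv' v (adjVia_symm _ _ hvv')).1 (hsub hv'))

theorem Cubic.exists_extension [Finite V] [Fintype E] (hG : G.Cubic) (h3 : G.EdgeConnected 3)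
    {C : Set E} (X : Set V) (B : Set E) (hX : X.Nonempty) (hCB : C ⊆ B) (hBX : B ⊆ G.inside X)
    (hl : IsLinked G.Adj Xᶜ)
    (hB : ∀ A : Set V, A.Nonempty → Aᶜ.Nonempty → ∃ e ∈ G.cutEdges A, e ∉ B)
    (hcl : ∀ R, B ⊆ R → G.Closed 2 R → IsLinked (G.adjVia (· ∈ R)) X) :
    ∃ B', C ⊆ B' ∧ (∀ A : Set V, A.Nonempty → Aᶜ.Nonempty → ∃ e ∈ G.cutEdges A, e ∉ B') ∧
      ∀ R, B' ⊆ R → G.Closed 2 R → IsLinked (G.adjVia (· ∈ R)) Set.univ := by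
  induction hn : Xᶜ.ncard using Nat.strong_induction_on generalizing X B with
  | _ n ih =>
  by_cases hH : Xᶜ.Nonempty
  swap
  · obtain rfl : X = Set.univ := by simpa [Set.not_nonempty_iff_eq_empty] using hH
    exact ⟨B, hCB, hB, hcl⟩
  -- it suffices to find a suitable set of vertices to be added to `X`
  have hstep : ∀ M ⊆ Xᶜ, IsLinked G.Adj M → IsLinked G.Adj (Xᶜ \ M) →
      (∀ A : Set V, A.Nonempty → Aᶜ.Nonempty → ∃ e ∈ G.cutEdges A, e ∉ B ∪ G.inside M) →
      (∃ x ∈ X, ∃ x' ∈ X, ∃ m ∈ M, ∃ m' ∈ M, ∃ e e', G.Ends e x m ∧ G.Ends e' x' m' ∧ e ≠ e') →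
      ∃ B', C ⊆ B' ∧ (∀ A : Set V, A.Nonempty → Aᶜ.Nonempty → ∃ e ∈ G.cutEdges A, e ∉ B') ∧
        ∀ R, B' ⊆ R → G.Closed 2 R → IsLinked (G.adjVia (· ∈ R)) Set.univ := by
    rintro M hMX hMl hRl hper ⟨x, hx, x', hx', m, hm, m', hm', e, e', he, he', hne⟩
    have hcompl : (X ∪ M)ᶜ = Xᶜ \ M := by
      rw [Set.compl_union, Set.sdiff_eq]
    refine ih (X ∪ M)ᶜ.ncard ?_ (X ∪ M) (B ∪ G.inside M) (hX.mono Set.subset_union_left)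
      (hCB.trans Set.subset_union_left) ?_ (hcompl ▸ hRl) hper ?_ rfl
    · rw [← hn, hcompl]
      exact Set.ncard_lt_ncard ((Set.ssubset_iff_of_subset Set.sdiff_subset).2
        ⟨m, hMX hm, fun h => h.2 hm⟩) (Set.toFinite _)
    · rintro f (hf | hf)
      · exact ⟨.inl (hBX hf).1, .inl (hBX hf).2⟩
      · exact ⟨.inr hf.1, .inr hf.2⟩
    · intro R hBR hR
      refine hG.isLinked_union_of_closed hR (hcl R (Set.subset_union_left.trans hBR) hR)
        (hMl.mono ?_) hx hx' hm hm' he he' hne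
      intro u hu v hv huv
      obtain ⟨f, hf⟩ := huv.exists_ends
      exact ⟨f, hBR (.inr (hf.mem_inside hu hv)), hf⟩
  by_cases hone : ∀ v ∉ X, ∀ x ∈ X, ∀ x' ∈ X, ∀ e e', G.Ends e v x → G.Ends e' v x' → e = e'
  · obtain ⟨M, hMX, hMl, hRl, ⟨a, ha, b, hb, hab, ⟨x, hx, hax⟩, y, hy, hby⟩, hM⟩ :=
      hG.exists_linked_part h3 hX hH hl hone
    obtain ⟨e, he⟩ := hax.exists_ends
    obtain ⟨e', he'⟩ := hby.exists_ends
    refine hstep M hMX hMl hRl (fun A => exists_cutEdge_notMem_union hBX hB hRl hM)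
      ⟨x, hx, y, hy, a, ha, b, hb, e, e', he.symm, he'.symm, ?_⟩
    rintro rfl
    rcases he.eq_or he' with h | h
    · exact hab h.1
    · exact hMX ha (h.1 ▸ hy)
  · push Not at hone
    obtain ⟨v, hv, x, hx, x', hx', e, e', he, he', hne⟩ := hone
    refine hstep {v} (by simpa using hv) (isLinked_singleton v) ?_ ?_
      ⟨x, hx, x', hx', v, rfl, v, rfl, e, e', he.symm, he'.symm, hne⟩
    · -- `v` has at most one neighbour outside `X`
      by_cases ht : ∃ t, t ∉ X ∧ t ≠ v ∧ G.Adj v t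
      · obtain ⟨t, htX, htv, hvt⟩ := ht
        obtain ⟨g, hg⟩ := hvt.exists_ends
        refine hl.sdiff adjVia_symm (isLinked_singleton t) (by simpa using htX) ⟨t, rfl⟩
          (by simpa using htv.symm) ?_
        rintro u rfl y hy hyt huy
        by_contra hyu
        obtain ⟨g', hg'⟩ := huy.exists_ends
        have hX' : ∀ {f h : E} {a b : V}, a ∈ X → b ∉ X → G.Ends f u a → G.Ends h u b → f ≠ h := by
          rintro f h a b ha hb hf hh rfl
          rcases hf.eq_or hh with h | h
          · exact hb (h.2 ▸ ha)
          · exact hv (h.2 ▸ ha)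
        refine hG.not_four_edges he he' hg hg' hne (hX' hx htX he hg) (hX' hx hy he hg')
          (hX' hx' htX he' hg) (hX' hx' hy he' hg') ?_
        rintro rfl
        rcases hg.eq_or hg' with h | h
        exacts [hyt h.2.symm, hyu h.1.symm]
      · push Not at ht
        have hsub : Xᶜ ⊆ {v} := hl {v} ⟨v, hv, rfl⟩ (by
          rintro u hu rfl w hw huw
          by_contra hwu
          exact ht w hw hwu huw)
        rw [Set.sdiff_eq_empty.2 hsub]
        rintro A ⟨y, hy, -⟩
        exact hy.elim
    · intro A hA hA'
      obtain ⟨f, hf, hfB⟩ := hB A hA hA'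
      refine ⟨f, hf, fun h => h.elim hfB fun h => ?_⟩
      obtain ⟨a, ha, b, hb, hab⟩ := mem_cutEdges.1 hf
      have h1 : a = v := hab.left_mem h
      have h2 : b = v := hab.symm.left_mem h
      exact hb (h2.trans h1.symm ▸ ha)

end Multigraph

/-- In a 3-edge-connected cubic graph, every peripheral cycle `C` is contained in some
peripheral 2-base `B`. -/
theorem peripheral_two_base_containing_cycle {V E : Type} [Fintype V] [Fintype E]
    (G : Multigraph V E) (hG : G.EdgeConnected 3) (hcubic : G.Cubic)
    (C : Set E) (hC : G.IsCycle C) (hCper : G.Peripheral C) :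
    ∃ B : Set E, C ⊆ B ∧ G.Peripheral B ∧ G.IsBase 2 B := by
  have : Nonempty V := hCper.1
  obtain ⟨e₀, he₀⟩ := hC.1
  obtain ⟨B, hCB, hper, hB⟩ := hcubic.exists_extension hG {v | G.touches C v} C
    ⟨G.src e₀, e₀, he₀, .inl rfl⟩ subset_rfl
    (fun e he => ⟨⟨e, he, .inl rfl⟩, ⟨e, he, .inr rfl⟩⟩) (hcubic.isLinked_compl_cycle hC hCper)
    (fun A hA hA' => Multigraph.exists_cutEdge_of_connectedVia hCper hA hA')
    (fun R hCR _ => hC.isLinked.mono fun _ _ _ _ ⟨e, he, h⟩ => ⟨e, hCR he, h⟩)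
  refine ⟨B, hCB, Multigraph.connectedVia_of_exists_cutEdge hper, ?_⟩
  refine Set.eq_univ_of_forall fun e => Set.mem_sInter.2 fun R ⟨hBR, hR⟩ => ?_
  by_contra heR
  refine heR (hcubic.mem_of_closed hR (e' := e) (Multigraph.reaches_of_isLinked
    ((hB R hBR hR).mono ?_) trivial trivial))
  rintro u - v - ⟨f, hf, huv⟩
  exact ⟨f, ⟨fun h => heR (h ▸ hf), .inl hf⟩, huv⟩
end
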